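/- Let p be an odd prime. If p ≡ 1 (mod 4), write p = x^2 + 4y^2 with integers x, y; then Σ_{k=0}^{p−1} k^2·C(2k,k)^3/(−8)^k ≡ (10/27)x^2 − (4/9)p + p^2/(54x^2) (mod p^3) and Σ_{k=0}^{p−1} k^3·C(2k,k)^3/(−8)^k ≡ −(4/81)x^2 + (4/27)p − 17p^2/(324x^2) (mod p^3). If p ≡ 3 (mod 4) and p ≠ 3, then Σ_{k=0}^{p−1} k^2·C(2k,k)^3/(−8)^k ≡ (1/18)R_1(p) + (7/27)p (mod p^2) and Σ_{k=0}^{p−1} k^3·C(2k,k)^3/(−8)^k ≡ −(2/27)R_1(p) − (10/81)p (mod p^2). -/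

import Mathlib

/-- `a ≡ b (mod p^r)` for rationals: the numerator of `a - b` in lowest terms
is divisible by `p^r`. -/
def ratCongr (p r : ℕ) (a b : ℚ) : Prop := (p : ℤ)^r ∣ (a - b).num
/-- `R_1(p) = (2p + 2 - 2^(p-1)) * C((p-1)/2, ⌊p/4⌋)^2`. -/
def R1 (p : ℕ) : ℚ :=
  (2*(p:ℚ) + 2 - 2^(p-1)) * (((p-1)/2).choose (p/4) : ℚ)^2

/-!
Let `S_j` be the sum of `k ^ j * C(2k, k) ^ 3 / (-8) ^ k` over `k < p`. Telescoping
`k ^ 3 * C(2k, k) ^ 3 / (-8) ^ k` gives `9 * S_3 + 12 * S_2 + 6 * S_1 + S_0 ≡ 0` modulo `p ^ 3`,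
so `S_0`, `3 * S_1 + S_0` and `18 * S_2 + 14 * S_1 + 3 * S_0` determine everything. Up to a unit
these three are the values at `v = 0` of hypergeometric sums, polynomials in a parameter `v`, in
which the term ratio `-((2 * j + 1) / (j + 1)) ^ 3` is deformed to
`-(2 * j + 1) * ((2 * j + 1) ^ 2 - v) / ((j + 1) * ((j + 1) ^ 2 - v))`. The substitution
`√v ↦ √v + 2` relates the sums to each other, hence gives them in closed form at every odd square,
in particular at `v = p ^ 2`; modulo `p ^ 2` this is their value at `0`.

Modulo `p ^ 3` the values at `0` and `p ^ 2` differ by `p ^ 2` times the linear coefficient modulo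
`p`. Modulo `p` the same substitution multiplies the polynomials by explicit factors, and a
polynomial over `ZMod p` of small degree that transforms so under a translation is nearly
determined: this gives the linear coefficients.

For `p ≡ 1` modulo `4` it remains to relate `S_0` to `x`. The Jacobi sum `J = a + b * i` of a
quartic character and its square has `a` odd, `b` even and norm `p`, so that `a ^ 2 = x ^ 2`. Its
image `α` in `ZMod (p ^ 3)`, computed with Teichmüller lifts, satisfies `α ^ 2 = S_0`, while the
image `β` of the conjugate satisfies `α * β = p` and `α + β = 2 * a`; hence
`4 * x ^ 2 * S_0 = (S_0 + p) ^ 2`.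
-/

section PerturbedSums

open Finset

variable {R : Type*} [CommRing R]

/-- Numerator of the ratio of the terms of index `j + 1` and `j` in the perturbed series, in which
`v` is the perturbation parameter: at `v = 0` the ratio is `-((2 * j + 1) / (j + 1)) ^ 3`, that of
`C(2j, j) ^ 3 / (-8) ^ j`. -/
def numFactor (v : R) (j : ℕ) : R := -(2 * j + 1) * ((2 * j + 1) ^ 2 - v)

/-- Denominator of the ratio whose numerator is `numFactor v j`. -/
def denFactor (v : R) (j : ℕ) : R := (j + 1) * ((j + 1) ^ 2 - v)

/-- The `k`-th term of the perturbed series, multiplied by the common denominator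
`∏ j ∈ range n, denFactor v j` of the terms of index at most `n`. -/
def perturbedTerm (n : ℕ) (v : R) (k : ℕ) : R :=
  (∏ j ∈ range k, numFactor v j) * ∏ j ∈ Ico k n, denFactor v j

/-- The sum of the terms of index at most `n` of the perturbed series, cleared of denominators and
weighted by `c`. -/
def weightedSum (c : ℕ → R) (n : ℕ) (v : R) : R :=
  ∑ k ∈ range (n + 1), c k * perturbedTerm n v k

/-- The perturbed sum of weight `1`. -/
def constSum (n : ℕ) (v : R) : R := weightedSum (fun _ ↦ 1) n v

/-- The perturbed sum whose weight `3k + 1` makes it antiperiodic under `√v ↦ √v + 2` modulo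
`2n + 1`. -/
def linearSum (n : ℕ) (v : R) : R := weightedSum (fun k ↦ 3 * k + 1) n v

/-- The perturbed sum of the quadratic weight for which `√v ↦ √v + 2` exchanges it with `constSum`,
up to a factor, modulo `2n + 1`. -/
def quadraticSum (n : ℕ) (v : R) : R :=
  weightedSum (fun k ↦ 18 * k ^ 2 + 14 * k + 3 - 3 * v) n v

theorem weightedSum_succ (c : ℕ → R) (n : ℕ) (v : R) :
    weightedSum c (n + 1) v =
      denFactor v n * weightedSum c n v + c (n + 1) * ∏ j ∈ range (n + 1), numFactor v j := by
  have term_succ : ∀ k ∈ range (n + 1),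
      c k * perturbedTerm (n + 1) v k = denFactor v n * (c k * perturbedTerm n v k) := by
    intro k hk
    rw [perturbedTerm, perturbedTerm, prod_Ico_succ_top (mem_range_succ_iff.mp hk)]
    ring
  rw [weightedSum, sum_range_succ, sum_congr rfl term_succ, ← mul_sum, weightedSum, perturbedTerm,
    Ico_self, prod_empty, mul_one]

section Map

variable {S : Type*} [CommRing S] (f : R →+* S)

theorem map_perturbedTerm (n : ℕ) (v : R) (k : ℕ) :
    f (perturbedTerm n v k) = perturbedTerm n (f v) k := by
  simp [perturbedTerm, numFactor, denFactor, map_ofNat]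

theorem map_weightedSum (c : ℕ → R) (n : ℕ) (v : R) :
    f (weightedSum c n v) = weightedSum (fun k ↦ f (c k)) n (f v) := by
  simp [weightedSum, map_perturbedTerm]

theorem map_constSum (n : ℕ) (v : R) : f (constSum n v) = constSum n (f v) := by
  simp [constSum, map_weightedSum]

theorem map_linearSum (n : ℕ) (v : R) : f (linearSum n v) = linearSum n (f v) := by
  simp [linearSum, map_weightedSum, map_ofNat]

theorem map_quadraticSum (n : ℕ) (v : R) : f (quadraticSum n v) = quadraticSum n (f v) := by
  simp [quadraticSum, map_weightedSum, map_ofNat]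

end Map

/-! ### The shift `w ↦ w + 2` of the parameter `v = w ^ 2` -/

theorem prod_numFactor_sq_succ (w : R) (n : ℕ) :
    ∏ j ∈ range (n + 1), numFactor (w ^ 2) j =
      -(2 * n + 1) * (2 * n + 1 - w) * (2 * n + 1 + w) * ∏ j ∈ range n, numFactor (w ^ 2) j := by
  rw [prod_range_succ, numFactor]
  ring

theorem prod_numFactor_shift (w : R) (n : ℕ) :
    ∏ j ∈ range (n + 1), numFactor ((w + 2) ^ 2) j =
      (2 * n + 3 + w) * (2 * n + 1) * (2 * n + 1 + w) * ∏ j ∈ range n, numFactor (w ^ 2) j := by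
  induction n with
  | zero => simp [numFactor]; ring
  | succ n ih =>
    rw [prod_range_succ, ih, prod_numFactor_sq_succ, numFactor]
    push_cast
    ring

theorem linearSum_shift (w : R) (n : ℕ) :
    (n - 1 - w) * (n - w) * linearSum n ((w + 2) ^ 2) +
        (n + 1 + w) * (n + 2 + w) * linearSum n (w ^ 2) =
      2 * (2 * n + 1) * (2 * n + 1 + w) * (w + 1) * ∏ j ∈ range n, numFactor (w ^ 2) j := by
  induction n with
  | zero => simp [linearSum, weightedSum, perturbedTerm]; ring
  | succ n ih =>
    simp only [linearSum] at ih ⊢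
    rw [weightedSum_succ, weightedSum_succ, prod_numFactor_shift, prod_numFactor_sq_succ,
      denFactor, denFactor]
    push_cast
    linear_combination (n + 1) * (n + 1 - w) * (n + 3 + w) * ih

theorem constSum_shift (w : R) (n : ℕ) :
    (3 * w + 1) * (3 * w + 5) * (n - 1 - w) * (n - w) * constSum n ((w + 2) ^ 2) +
        3 * (n + 1 + w) * (n + 2 + w) * quadraticSum n (w ^ 2) =
      -2 * (2 * n + 1) * (2 * n + 1 + w) * (2 * (w + 1) - (9 * w + 5) * (n + 1) - 6 * (n + 1) ^ 2) *
        ∏ j ∈ range n, numFactor (w ^ 2) j := by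
  induction n with
  | zero => simp [constSum, quadraticSum, weightedSum, perturbedTerm]; ring
  | succ n ih =>
    simp only [constSum, quadraticSum] at ih ⊢
    rw [weightedSum_succ, weightedSum_succ, prod_numFactor_shift, prod_numFactor_sq_succ,
      denFactor, denFactor]
    push_cast
    linear_combination (n + 1) * (n + 1 - w) * (n + 3 + w) * ih

theorem quadraticSum_shift (w : R) (n : ℕ) :
    3 * (n - 1 - w) * (n - w) * quadraticSum n ((w + 2) ^ 2) +
        (3 * w + 1) * (3 * w + 5) * (n + 1 + w) * (n + 2 + w) * constSum n (w ^ 2) =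
      -2 * (2 * n + 1) * (2 * n + 1 + w) *
        (2 * (w + 1) - (9 * w + 13) * (n + 1) + 6 * (n + 1) ^ 2) *
        ∏ j ∈ range n, numFactor (w ^ 2) j := by
  induction n with
  | zero => simp [constSum, quadraticSum, weightedSum, perturbedTerm]; ring
  | succ n ih =>
    simp only [constSum, quadraticSum] at ih ⊢
    rw [weightedSum_succ, weightedSum_succ, prod_numFactor_shift, prod_numFactor_sq_succ,
      denFactor, denFactor]
    push_cast
    linear_combination (n + 1) * (n + 1 - w) * (n + 3 + w) * ih

/-! ### Closed forms at `v = (2n + 1) ^ 2` -/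

theorem linearSum_succ_odd_sq (n : ℕ) :
    linearSum (n + 1) ((2 * n + 3 : R) ^ 2) =
      3 * (n + 1) * (3 * n + 2) * (3 * n + 4) * linearSum n ((2 * n + 1 : R) ^ 2) := by
  have shift := linearSum_shift (2 * n + 1 : R) n
  have shift_prod := prod_numFactor_shift (2 * n + 1 : R) n
  rw [show (2 * n + 1 + 2 : R) = 2 * n + 3 by ring] at shift shift_prod
  simp only [linearSum] at shift ⊢
  rw [weightedSum_succ, shift_prod, denFactor]
  push_cast
  linear_combination -(3 * n + 4) * shift

theorem linearSum_odd_sq (n : ℕ) :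
    linearSum n ((2 * n + 1 : R) ^ 2) = (3 * n + 1).factorial := by
  induction n with
  | zero => simp [linearSum, weightedSum, perturbedTerm]
  | succ n ih =>
    rw [Nat.cast_succ, show (2 * (n + 1) + 1 : R) = 2 * n + 3 by ring, linearSum_succ_odd_sq, ih,
      show 3 * (n + 1) + 1 = 3 * n + 1 + 1 + 1 + 1 by ring]
    simp only [Nat.factorial_succ]
    push_cast
    ring

theorem constSum_succ_odd_sq (n : ℕ) :
    4 * constSum (n + 1) ((2 * n + 3 : ℤ) ^ 2) =
      9 * (n + 1) * quadraticSum n ((2 * n + 1 : ℤ) ^ 2) := by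
  have shift := constSum_shift (2 * n + 1 : ℤ) n
  have shift_prod := prod_numFactor_shift (2 * n + 1 : ℤ) n
  rw [show (2 * n + 1 + 2 : ℤ) = 2 * n + 3 by ring] at shift shift_prod
  simp only [constSum] at shift ⊢
  rw [weightedSum_succ, shift_prod, denFactor]
  apply mul_left_cancel₀ (show (3 * n + 2 : ℤ) ≠ 0 by positivity)
  linear_combination -shift

theorem quadraticSum_succ_odd_sq (n : ℕ) :
    quadraticSum (n + 1) ((2 * n + 3 : ℤ) ^ 2) =
      4 * (n + 1) * (3 * n + 2) ^ 2 * (3 * n + 4) ^ 2 * constSum n ((2 * n + 1 : ℤ) ^ 2) := by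
  have shift := quadraticSum_shift (2 * n + 1 : ℤ) n
  have shift_prod := prod_numFactor_shift (2 * n + 1 : ℤ) n
  rw [show (2 * n + 1 + 2 : ℤ) = 2 * n + 3 by ring] at shift shift_prod
  simp only [quadraticSum] at shift ⊢
  rw [weightedSum_succ, shift_prod, denFactor]
  apply mul_left_cancel₀ (show (3 : ℤ) ≠ 0 by norm_num)
  push_cast
  linear_combination -(3 * n + 4) * shift

theorem constSum_two_mul_odd_sq_int (m : ℕ) :
    constSum (2 * m) ((4 * m + 1 : ℤ) ^ 2) = 16 ^ m * m.centralBinom * (3 * m).factorial ^ 2 := by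
  induction m with
  | zero => simp [constSum, weightedSum, perturbedTerm]
  | succ m ih =>
    have to_quadratic := constSum_succ_odd_sq (2 * m + 1)
    have to_const := quadraticSum_succ_odd_sq (2 * m)
    have binom : ((m : ℤ) + 1) * (m + 1).centralBinom = 2 * (2 * m + 1) * m.centralBinom := by
      exact_mod_cast Nat.succ_mul_centralBinom_succ m
    push_cast at to_quadratic to_const
    rw [show (2 * (2 * m : ℤ) + 1) = 4 * m + 1 by ring, ih] at to_const
    rw [show (2 * (2 * m + 1) + 1 : ℤ) = 2 * (2 * m) + 3 by ring, to_const] at to_quadratic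
    rw [Nat.cast_succ, show (4 * (m + 1) + 1 : ℤ) = 2 * (2 * m + 1) + 3 by ring,
      show 2 * (m + 1) = 2 * m + 1 + 1 by ring, show 3 * (m + 1) = 3 * m + 1 + 1 + 1 by ring]
    apply mul_left_cancel₀ (show (4 : ℤ) ≠ 0 by norm_num)
    simp only [Nat.factorial_succ]
    push_cast
    linear_combination to_quadratic - 64 * 9 * 16 ^ m * (m + 1) * (3 * m + 1) ^ 2 *
      (3 * m + 2) ^ 2 * ((3 * m).factorial : ℤ) ^ 2 * binom

theorem quadraticSum_two_mul_add_one_odd_sq_int (m : ℕ) :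
    quadraticSum (2 * m + 1) ((4 * m + 3 : ℤ) ^ 2) =
      4 * 16 ^ (m + 1) * ((2 * m + 1) * m.centralBinom) * (3 * m + 2).factorial ^ 2 := by
  have to_const := quadraticSum_succ_odd_sq (2 * m)
  push_cast at to_const
  rw [show (2 * (2 * m : ℤ) + 1) = 4 * m + 1 by ring, constSum_two_mul_odd_sq_int] at to_const
  rw [show (4 * m + 3 : ℤ) = 2 * (2 * m) + 3 by ring, to_const]
  simp only [Nat.factorial_succ]
  push_cast
  ring

theorem constSum_quadraticSum_eq_zero_int (m : ℕ) :
    quadraticSum (2 * m) ((4 * m + 1 : ℤ) ^ 2) = 0 ∧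
      constSum (2 * m + 1) ((4 * m + 3 : ℤ) ^ 2) = 0 := by
  have const_eq_zero {m : ℕ} (h : quadraticSum (2 * m) ((4 * m + 1 : ℤ) ^ 2) = 0) :
      constSum (2 * m + 1) ((4 * m + 3 : ℤ) ^ 2) = 0 := by
    have to_quadratic := constSum_succ_odd_sq (2 * m)
    push_cast at to_quadratic
    rw [show (2 * (2 * m : ℤ) + 1) = 4 * m + 1 by ring, h] at to_quadratic
    rw [show (4 * m + 3 : ℤ) = 2 * (2 * m) + 3 by ring]
    linarith
  induction m with
  | zero =>
    have quad : quadraticSum (2 * 0) ((4 * (0 : ℕ) + 1 : ℤ) ^ 2) = 0 := by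
      simp [quadraticSum, weightedSum, perturbedTerm]
    exact ⟨quad, const_eq_zero quad⟩
  | succ m ih =>
    have to_const := quadraticSum_succ_odd_sq (2 * m + 1)
    push_cast at to_const
    have quad : quadraticSum (2 * (m + 1)) ((4 * (m + 1 : ℕ) + 1 : ℤ) ^ 2) = 0 := by
      rw [Nat.cast_succ, show (4 * (m + 1) + 1 : ℤ) = 2 * (2 * m + 1) + 3 by ring,
        show 2 * (m + 1) = 2 * m + 1 + 1 by ring, to_const,
        show (2 * (2 * m + 1) + 1 : ℤ) = 4 * m + 3 by ring, ih.2, mul_zero]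
    exact ⟨quad, const_eq_zero quad⟩

theorem constSum_two_mul_odd_sq (m : ℕ) :
    constSum (2 * m) ((4 * m + 1 : R) ^ 2) = 16 ^ m * m.centralBinom * (3 * m).factorial ^ 2 := by
  have h := congrArg (Int.castRingHom R) (constSum_two_mul_odd_sq_int m)
  rw [map_constSum] at h
  simpa using h

theorem quadraticSum_two_mul_add_one_odd_sq (m : ℕ) :
    quadraticSum (2 * m + 1) ((4 * m + 3 : R) ^ 2) =
      4 * 16 ^ (m + 1) * ((2 * m + 1) * m.centralBinom) * (3 * m + 2).factorial ^ 2 := by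
  have h := congrArg (Int.castRingHom R) (quadraticSum_two_mul_add_one_odd_sq_int m)
  rw [map_quadraticSum] at h
  simpa using h

theorem quadraticSum_two_mul_odd_sq (m : ℕ) : quadraticSum (2 * m) ((4 * m + 1 : R) ^ 2) = 0 := by
  have h := congrArg (Int.castRingHom R) (constSum_quadraticSum_eq_zero_int m).1
  rw [map_quadraticSum] at h
  simpa using h

theorem constSum_two_mul_add_one_odd_sq (m : ℕ) :
    constSum (2 * m + 1) ((4 * m + 3 : R) ^ 2) = 0 := by
  have h := congrArg (Int.castRingHom R) (constSum_quadraticSum_eq_zero_int m).2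
  rw [map_constSum] at h
  simpa using h

end PerturbedSums

section Periodic

open Polynomial

variable {p : ℕ} [Fact p.Prime] {f g : (ZMod p)[X]} {c : ZMod p}

theorem taylor_mul_comm_of_taylor_mul_comm (hc : c ≠ 0) (hg : g ≠ 0)
    (h : taylor c f * g = f * taylor c g) (a : ZMod p) : taylor a f * g = f * taylor a g := by
  have multiples (k : ℕ) : taylor (k * c) f * g = f * taylor (k * c) g := by
    induction k with
    | zero => simp
    | succ k ih =>
      have shifted := congrArg (taylor (k * c)) h
      simp only [taylor_mul, taylor_taylor] at shifted
      rw [← add_one_mul] at shifted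
      push_cast
      apply mul_right_cancel₀ ((map_ne_zero_iff _ (taylor_injective (k * c))).mpr hg)
      linear_combination g * shifted + taylor ((k + 1) * c) g * ih
  simpa [div_mul_cancel₀ _ hc] using multiples (a / c).val

theorem C_eval_zero_mul_eq_of_taylor_mul_comm (hc : c ≠ 0) (hg : g ≠ 0)
    (h : taylor c f * g = f * taylor c g) (hf_deg : f.natDegree < p) (hg_deg : g.natDegree < p) :
    C (g.eval 0) * f = C (f.eval 0) * g := by
  rw [← sub_eq_zero]
  refine eq_zero_of_natDegree_lt_card_of_eval_eq_zero _ Function.injective_id (fun a ↦ ?_) ?_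
  · have at_zero := congrArg (eval 0) (taylor_mul_comm_of_taylor_mul_comm hc hg h a)
    simp only [eval_mul, taylor_eval, zero_add] at at_zero
    simp only [id_eq, eval_sub, eval_mul, eval_C]
    linear_combination at_zero
  · rw [ZMod.card]
    exact (natDegree_sub_le _ _).trans_lt (max_lt ((natDegree_C_mul_le _ _).trans_lt hf_deg)
      ((natDegree_C_mul_le _ _).trans_lt hg_deg))

theorem X_pow_sub_X_dvd_of_eval_eq_zero (h : ∀ a, f.eval a = 0) : X ^ p - X ∣ f := by
  have one_lt : 1 < p := (Fact.out : p.Prime).one_lt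
  have monic : (X ^ p - X : (ZMod p)[X]).Monic :=
    monic_X_pow_sub (by rw [degree_X]; exact_mod_cast one_lt)
  have natDegree_eq := FiniteField.X_pow_card_sub_X_natDegree_eq (ZMod p) one_lt
  rw [← modByMonic_eq_zero_iff_dvd monic]
  refine eq_zero_of_natDegree_lt_card_of_eval_eq_zero _ Function.injective_id (fun a ↦ ?_) ?_
  · have at_a := congrArg (eval a) (modByMonic_add_div f (X ^ p - X : (ZMod p)[X]))
    simpa [h] using at_a
  · rw [ZMod.card]
    exact (natDegree_modByMonic_lt f monic (ne_of_apply_ne natDegree (by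
      rw [natDegree_eq, natDegree_one]; omega))).trans_eq natDegree_eq

theorem taylor_X_pow_sub_X (a : ZMod p) : taylor a (X ^ p - X : (ZMod p)[X]) = X ^ p - X := by
  rw [map_sub, taylor_pow, taylor_X, add_pow_char, ← C_pow, ZMod.pow_card, add_sub_add_right_eq_sub]

theorem exists_eq_comp_X_pow_sub_X (hc : c ≠ 0) (h : taylor c f = f) :
    ∃ g : (ZMod p)[X], f = g.comp (X ^ p - X) := by
  have one_lt : 1 < p := (Fact.out : p.Prime).one_lt
  induction hd : f.natDegree using Nat.strong_induction_on generalizing f with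
  | _ d ih =>
    subst hd
    have eval_const (a : ZMod p) : f.eval a = f.eval 0 := by
      have := taylor_mul_comm_of_taylor_mul_comm hc one_ne_zero (by simpa using h) a
      simpa [taylor_eval] using congrArg (eval 0) this
    obtain ⟨q, hq⟩ : X ^ p - X ∣ f - C (f.eval 0) :=
      X_pow_sub_X_dvd_of_eval_eq_zero fun a ↦ by rw [eval_sub, eval_C, eval_const, sub_self]
    have ne_zero := FiniteField.X_pow_card_sub_X_ne_zero (ZMod p) one_lt
    rcases eq_or_ne q 0 with rfl | q_ne_zero
    · exact ⟨C (f.eval 0), by rw [C_comp, ← sub_eq_zero, hq, mul_zero]⟩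
    · have q_periodic : taylor c q = q := by
        apply mul_left_cancel₀ ne_zero
        rw [← hq, ← taylor_X_pow_sub_X c, ← taylor_mul, ← hq, map_sub, h, taylor_C]
      have q_deg : q.natDegree < f.natDegree := by
        have := natDegree_mul ne_zero q_ne_zero
        rw [← hq, natDegree_sub_C, FiniteField.X_pow_card_sub_X_natDegree_eq _ one_lt] at this
        omega
      obtain ⟨r, hr⟩ := ih _ q_deg q_periodic rfl
      refine ⟨C (f.eval 0) + X * r, ?_⟩
      rw [add_comp, C_comp, mul_comp, X_comp, ← hr, ← hq, add_sub_cancel]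

end Periodic

section PerturbedPolynomials

open Finset Polynomial

variable {R : Type*} [CommRing R]

theorem taylor_constSum (n : ℕ) (r : R) (f : R[X]) :
    taylor r (constSum n f) = constSum n (taylor r f) :=
  map_constSum (taylorAlgHom r : R[X] →+* R[X]) n f

theorem taylor_linearSum (n : ℕ) (r : R) (f : R[X]) :
    taylor r (linearSum n f) = linearSum n (taylor r f) :=
  map_linearSum (taylorAlgHom r : R[X] →+* R[X]) n f

theorem taylor_quadraticSum (n : ℕ) (r : R) (f : R[X]) :
    taylor r (quadraticSum n f) = quadraticSum n (taylor r f) :=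
  map_quadraticSum (taylorAlgHom r : R[X] →+* R[X]) n f

theorem expand_constSum (n : ℕ) : expand R 2 (constSum n X) = constSum n (X ^ 2) := by
  simpa using map_constSum (expand R 2 : R[X] →+* R[X]) n X

theorem expand_linearSum (n : ℕ) : expand R 2 (linearSum n X) = linearSum n (X ^ 2) := by
  simpa using map_linearSum (expand R 2 : R[X] →+* R[X]) n X

theorem expand_quadraticSum (n : ℕ) :
    expand R 2 (quadraticSum n X) = quadraticSum n (X ^ 2) := by
  simpa using map_quadraticSum (expand R 2 : R[X] →+* R[X]) n X

theorem eval_constSum (n : ℕ) (a : R) : (constSum n X).eval a = constSum n a := by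
  simpa using map_constSum (evalRingHom a) n X

theorem eval_linearSum (n : ℕ) (a : R) : (linearSum n X).eval a = linearSum n a := by
  simpa using map_linearSum (evalRingHom a) n X

theorem eval_quadraticSum (n : ℕ) (a : R) : (quadraticSum n X).eval a = quadraticSum n a := by
  simpa using map_quadraticSum (evalRingHom a) n X

theorem numFactor_X (j : ℕ) :
    numFactor (X : R[X]) j = C (2 * j + 1 : R) * X + C (-(2 * j + 1 : R) ^ 3) := by
  simp [numFactor, map_ofNat C]
  ring

theorem denFactor_X (j : ℕ) :
    denFactor (X : R[X]) j = C (-(j + 1) : R) * X + C ((j + 1 : R) ^ 3) := by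
  simp [denFactor]
  ring

theorem natDegree_prod_numFactor_le (k : ℕ) :
    (∏ j ∈ range k, numFactor (X : R[X]) j).natDegree ≤ k := by
  refine (natDegree_prod_le _ _).trans ((sum_le_card_nsmul _ _ 1 fun j _ ↦ ?_).trans_eq (by simp))
  exact numFactor_X (R := R) j ▸ natDegree_linear_le

theorem natDegree_prod_denFactor_le (k n : ℕ) :
    (∏ j ∈ Ico k n, denFactor (X : R[X]) j).natDegree ≤ n - k := by
  refine (natDegree_prod_le _ _).trans ((sum_le_card_nsmul _ _ 1 fun j _ ↦ ?_).trans_eq (by simp))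
  exact denFactor_X (R := R) j ▸ natDegree_linear_le

theorem coeff_prod_numFactor (k : ℕ) :
    (∏ j ∈ range k, numFactor (X : R[X]) j).coeff k = ∏ j ∈ range k, (2 * j + 1 : R) := by
  have := coeff_prod_of_natDegree_le (s := range k) (fun j ↦ numFactor (X : R[X]) j) 1
    fun j _ ↦ numFactor_X (R := R) j ▸ natDegree_linear_le
  simpa only [numFactor_X, coeff_add, coeff_C_mul, coeff_X_one, mul_one, coeff_C_succ, add_zero,
    card_range] using this

theorem coeff_prod_denFactor (k n : ℕ) :
    (∏ j ∈ Ico k n, denFactor (X : R[X]) j).coeff (n - k) = ∏ j ∈ Ico k n, (-(j + 1) : R) := by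
  have := coeff_prod_of_natDegree_le (s := Ico k n) (fun j ↦ denFactor (X : R[X]) j) 1
    fun j _ ↦ denFactor_X (R := R) j ▸ natDegree_linear_le
  simpa only [denFactor_X, coeff_add, coeff_C_mul, coeff_X_one, mul_one, coeff_C_succ, add_zero,
    Nat.card_Ico] using this

theorem natDegree_perturbedTerm_le {n k : ℕ} (hk : k ≤ n) :
    (perturbedTerm n (X : R[X]) k).natDegree ≤ n :=
  (natDegree_mul_le_of_le (natDegree_prod_numFactor_le k)
    (natDegree_prod_denFactor_le k n)).trans_eq (Nat.add_sub_cancel' hk)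

theorem natDegree_weightedSum_le (c : ℕ → R) (n : ℕ) :
    (weightedSum (fun k ↦ C (c k)) n (X : R[X])).natDegree ≤ n :=
  natDegree_sum_le_of_forall_le _ _ fun _ hk ↦ (natDegree_C_mul_le _ _).trans
    (natDegree_perturbedTerm_le (mem_range_succ_iff.mp hk))

theorem natDegree_constSum_le (n : ℕ) : (constSum n (X : R[X])).natDegree ≤ n := by
  simpa [constSum] using natDegree_weightedSum_le (fun _ ↦ (1 : R)) n

theorem natDegree_linearSum_le (n : ℕ) : (linearSum n (X : R[X])).natDegree ≤ n := by
  simpa [linearSum, map_ofNat C] using natDegree_weightedSum_le (fun k ↦ (3 * k + 1 : R)) n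

theorem quadraticSum_X (n : ℕ) :
    quadraticSum n (X : R[X]) =
      weightedSum (fun k ↦ C (18 * k ^ 2 + 14 * k + 3 : R)) n X + X * (C (-3) * constSum n X) := by
  rw [quadraticSum, constSum, weightedSum, weightedSum, weightedSum, mul_sum, mul_sum,
    ← sum_add_distrib]
  refine sum_congr rfl fun k _ ↦ ?_
  simp [map_ofNat C]
  ring

theorem natDegree_quadraticSum_le (n : ℕ) : (quadraticSum n (X : R[X])).natDegree ≤ n + 1 := by
  rw [quadraticSum_X]
  refine natDegree_add_le_of_degree_le ((natDegree_weightedSum_le _ n).trans n.le_succ) ?_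
  exact (natDegree_mul_le_of_le natDegree_X_le ((natDegree_C_mul_le _ _).trans
    (natDegree_constSum_le n))).trans_eq (add_comm 1 n)

theorem coeff_quadraticSum_succ (n : ℕ) :
    (quadraticSum n (X : R[X])).coeff (n + 1) = -3 * (constSum n (X : R[X])).coeff n := by
  rw [quadraticSum_X, coeff_add, coeff_X_mul, coeff_C_mul, coeff_eq_zero_of_natDegree_lt
    (Nat.lt_succ_of_le (natDegree_weightedSum_le (R := R) _ n)), zero_add]

theorem coeff_perturbedTerm {n k : ℕ} (h : (2 * n + 1 : R) = 0) (hk : k ≤ n) :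
    (perturbedTerm n (X : R[X]) k).coeff n = (-1) ^ n * n.factorial * (2 ^ k * n.choose k) := by
  have num_eq : ∏ j ∈ range k, (2 * j + 1 : R) = (-2) ^ k * n.descFactorial k := by
    rw [Nat.descFactorial_eq_prod_range, Nat.cast_prod, ← card_range k, ← prod_const,
      card_range, ← prod_mul_distrib]
    refine prod_congr rfl fun j hj ↦ ?_
    rw [Nat.cast_sub ((mem_range.mp hj).le.trans hk)]
    linear_combination h
  have den_eq : (k.factorial : R) * ∏ j ∈ Ico k n, (-(j + 1) : R) =
      (-1) ^ (n - k) * n.factorial := by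
    rw [← prod_range_add_one_eq_factorial, ← prod_range_add_one_eq_factorial, prod_neg,
      Nat.card_Ico, Nat.cast_prod, Nat.cast_prod, ← prod_range_mul_prod_Ico _ hk]
    push_cast
    ring
  have sign : (-1 : R) ^ n = (-1) ^ k * (-1) ^ (n - k) := by rw [← pow_add, Nat.add_sub_cancel' hk]
  have coeff_eq := coeff_mul_add_eq_of_natDegree_le (natDegree_prod_numFactor_le (R := R) k)
    (natDegree_prod_denFactor_le k n)
  rw [Nat.add_sub_cancel' hk, coeff_prod_numFactor, coeff_prod_denFactor, num_eq,
    Nat.descFactorial_eq_factorial_mul_choose, neg_pow (2 : R)] at coeff_eq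
  rw [perturbedTerm, coeff_eq, sign]
  push_cast
  linear_combination (-1) ^ k * 2 ^ k * (n.choose k : R) * den_eq

theorem coeff_constSum {n : ℕ} (h : (2 * n + 1 : R) = 0) :
    (constSum n (X : R[X])).coeff n = (-1) ^ n * n.factorial * 3 ^ n := by
  calc (constSum n (X : R[X])).coeff n
      = ∑ k ∈ range (n + 1), ((-1) ^ n * n.factorial * (2 ^ k * 1 ^ (n - k) * n.choose k) : R) := by
        rw [constSum, weightedSum, finsetSum_coeff]
        refine sum_congr rfl fun k hk ↦ ?_
        rw [one_mul, coeff_perturbedTerm h (mem_range_succ_iff.mp hk), one_pow, mul_one]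
    _ = (-1) ^ n * n.factorial * 3 ^ n := by
        rw [← mul_sum, ← add_pow, show (2 + 1 : R) = 3 by norm_num]

theorem shift_factor_eq {n : ℕ} (h : (2 * n + 1 : R) = 0) (w : R) :
    (n + 1 + w) * (n + 2 + w) = (n - 1 - w) * (n - w) := by
  linear_combination (2 * w + 2) * h

variable [IsDomain R]

theorem shift_factor_X_ne_zero (n : ℕ) : ((n - 1 : R[X]) - X) * ((n : R[X]) - X) ≠ 0 := by
  have ne_zero (a : R) : C a - X ≠ 0 := by
    rw [← neg_ne_zero, neg_sub]
    exact X_sub_C_ne_zero a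
  simpa using mul_ne_zero (ne_zero (n - 1)) (ne_zero n)

theorem linearSum_X_add_two_sq {n : ℕ} (h : (2 * n + 1 : R[X]) = 0) :
    linearSum n ((X + 2) ^ 2 : R[X]) = -linearSum n (X ^ 2) := by
  apply mul_left_cancel₀ (shift_factor_X_ne_zero (R := R) n)
  linear_combination linearSum_shift (X : R[X]) n -
    linearSum n (X ^ 2 : R[X]) * shift_factor_eq h X +
    2 * (2 * n + 1 + X) * (X + 1) * (∏ j ∈ range n, numFactor (X ^ 2) j) * h

theorem constSum_X_add_two_sq {n : ℕ} (h : (2 * n + 1 : R[X]) = 0) :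
    (3 * X + 1) * (3 * X + 5) * constSum n ((X + 2) ^ 2 : R[X]) = -3 * quadraticSum n (X ^ 2) := by
  apply mul_left_cancel₀ (shift_factor_X_ne_zero (R := R) n)
  linear_combination constSum_shift (X : R[X]) n -
    3 * quadraticSum n (X ^ 2 : R[X]) * shift_factor_eq h X -
    2 * (2 * n + 1 + X) * (2 * (X + 1) - (9 * X + 5) * (n + 1) - 6 * (n + 1) ^ 2) *
        (∏ j ∈ range n, numFactor (X ^ 2) j) * h

theorem quadraticSum_X_add_two_sq {n : ℕ} (h : (2 * n + 1 : R[X]) = 0) :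
    3 * quadraticSum n ((X + 2) ^ 2 : R[X]) =
      -((3 * X + 1) * (3 * X + 5)) * constSum n (X ^ 2) := by
  apply mul_left_cancel₀ (shift_factor_X_ne_zero (R := R) n)
  linear_combination quadraticSum_shift (X : R[X]) n -
    (3 * X + 1) * (3 * X + 5) * constSum n (X ^ 2 : R[X]) * shift_factor_eq h X -
    2 * (2 * n + 1 + X) * (2 * (X + 1) - (9 * X + 13) * (n + 1) + 6 * (n + 1) ^ 2) *
        (∏ j ∈ range n, numFactor (X ^ 2) j) * h

end PerturbedPolynomials

section ModPrime

open Finset Polynomial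

variable {p n : ℕ}

theorem two_mul_add_one_eq_zero {A : Type*} [CommRing A] [CharP A p] (hn : p = 2 * n + 1) :
    (2 * n + 1 : A) = 0 := by
  have := CharP.cast_eq_zero A p
  rw [hn] at this
  exact_mod_cast this

theorem natCast_zmod_ne_zero_of_lt {k : ℕ} (hk : k ≠ 0) (hkp : k < p) : (k : ZMod p) ≠ 0 :=
  (ZMod.natCast_eq_zero_iff k p).not.mpr (Nat.not_dvd_of_pos_of_lt hk.pos hkp)

theorem twelve_mul_add_seven_ne_zero {i : ℕ} (h4 : p % 4 = 1) (hi : 2 * i + 1 < p) :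
    (12 * i + 7 : ZMod p) ≠ 0 := by
  have cast_ne : ((12 * i + 7 : ℕ) : ZMod p) ≠ 0 := by
    rw [Ne, ZMod.natCast_eq_zero_iff]
    rintro ⟨k, hk⟩
    have k_lt : k < 6 := by by_contra! h; nlinarith
    interval_cases k <;> omega
  exact_mod_cast cast_ne

theorem taylor_two_X_sq {R : Type*} [CommRing R] : taylor 2 (X ^ 2 : R[X]) = (X + 2) ^ 2 := by
  simp [map_ofNat C]

variable [Fact p.Prime]

theorem two_ne_zero_of_eq (hn : p = 2 * n + 1) : (2 : ZMod p) ≠ 0 := by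
  have := (Fact.out : p.Prime).two_le
  exact_mod_cast natCast_zmod_ne_zero_of_lt two_ne_zero (by omega : 2 < p)

theorem three_ne_zero_of_eq (hn : p = 2 * n + 1) (hp3 : p ≠ 3) : (3 : ZMod p) ≠ 0 := by
  have := (Fact.out : p.Prime).two_le
  exact_mod_cast natCast_zmod_ne_zero_of_lt three_ne_zero (by omega : 3 < p)

theorem three_mul_X_add_C_ne_zero (h3 : (3 : ZMod p) ≠ 0) (a : ZMod p) :
    (3 * X + C a : (ZMod p)[X]) ≠ 0 := by
  have := (monic_X_add_C (a / 3)).ne_zero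
  have eq_mul : (3 * X + C a : (ZMod p)[X]) = C 3 * (X + C (a / 3)) := by
    rw [mul_add, ← C_mul, mul_div_cancel₀ _ h3, map_ofNat C]
  exact eq_mul ▸ mul_ne_zero (C_ne_zero.mpr h3) this

theorem linearSum_X_eq_zero (hn : p = 2 * n + 1) : linearSum n (X : (ZMod p)[X]) = 0 := by
  have h2 := two_ne_zero_of_eq hn
  have antiperiodic : taylor 2 (linearSum n (X ^ 2 : (ZMod p)[X])) = -linearSum n (X ^ 2) := by
    rw [taylor_linearSum, taylor_two_X_sq, linearSum_X_add_two_sq (two_mul_add_one_eq_zero hn)]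
  have periodic : taylor (2 + 2) (linearSum n (X ^ 2 : (ZMod p)[X])) * 1 =
      linearSum n (X ^ 2) * taylor (2 + 2) 1 := by
    rw [← taylor_taylor, antiperiodic, map_neg, antiperiodic, neg_neg, taylor_one, C_1]
  have deg_lt : (linearSum n (X ^ 2 : (ZMod p)[X])).natDegree < p := by
    rw [← expand_linearSum, natDegree_expand]
    have := natDegree_linearSum_le (R := ZMod p) n
    omega
  have const := C_eval_zero_mul_eq_of_taylor_mul_comm
    (by rw [← two_mul]; exact mul_ne_zero h2 h2) one_ne_zero periodic deg_lt
    (by simpa using (Fact.out : p.Prime).pos)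
  rw [eval_one, C_1, one_mul, mul_one] at const
  have eval_eq_zero : 2 * (linearSum n (X ^ 2 : (ZMod p)[X])).eval 0 = 0 := by
    have at_zero := congrArg (eval 0) antiperiodic
    rw [const, taylor_C, eval_neg, eval_C] at at_zero
    linear_combination at_zero
  rw [(mul_eq_zero.mp eval_eq_zero).resolve_left h2, C_0, ← expand_linearSum] at const
  exact (expand_eq_zero two_pos).mp const

/-! ### The product of the constant and the quadratic sums -/

theorem taylor_constSum_mul_quadraticSum (hn : p = 2 * n + 1) (hp3 : p ≠ 3) :
    taylor 2 (expand (ZMod p) 2 (constSum n X * quadraticSum n X)) =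
      expand (ZMod p) 2 (constSum n X * quadraticSum n X) := by
  have h3 := three_ne_zero_of_eq hn hp3
  have const_shift := constSum_X_add_two_sq (R := ZMod p) (two_mul_add_one_eq_zero hn)
  have quad_shift := quadraticSum_X_add_two_sq (R := ZMod p) (two_mul_add_one_eq_zero hn)
  rw [map_mul, expand_constSum, expand_quadraticSum, taylor_mul, taylor_constSum,
    taylor_quadraticSum, taylor_two_X_sq]
  apply mul_left_cancel₀ (mul_ne_zero (mul_ne_zero (C_ne_zero.mpr h3)
    (three_mul_X_add_C_ne_zero h3 1)) (three_mul_X_add_C_ne_zero h3 5))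
  rw [map_ofNat C, map_ofNat C, C_1]
  linear_combination 3 * quadraticSum n ((X + 2) ^ 2 : (ZMod p)[X]) * const_shift -
    3 * quadraticSum n (X ^ 2 : (ZMod p)[X]) * quad_shift

theorem coeff_two_eq_coeff_two_mul_of_periodic {Q : (ZMod p)[X]} (hp2 : 2 < p)
    (periodic : taylor 2 Q = Q) (deg_le : Q.natDegree ≤ 2 * p) (coeff_one : Q.coeff 1 = 0) :
    Q.coeff 2 = Q.coeff (2 * p) := by
  have h2 : (2 : ZMod p) ≠ 0 := by exact_mod_cast natCast_zmod_ne_zero_of_lt two_ne_zero hp2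
  obtain ⟨g, rfl⟩ := exists_eq_comp_X_pow_sub_X h2 periodic
  rw [natDegree_comp, FiniteField.X_pow_card_sub_X_natDegree_eq _ (by omega)] at deg_le
  have g_deg : g.natDegree ≤ 2 := Nat.le_of_mul_le_mul_right deg_le (by omega)
  have expansion : g.comp (X ^ p - X) =
      C (g.coeff 0) + C (g.coeff 1) * (X ^ p - X) +
        C (g.coeff 2) * (X ^ (2 * p) - C 2 * X ^ (p + 1) + X ^ 2) := by
    conv_lhs => rw [g.as_sum_range' 3 (by omega)]
    simp only [sum_range_succ, range_zero, sum_empty, zero_add, add_comp, monomial_comp,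
      map_ofNat C]
    ring
  rw [expansion] at coeff_one ⊢
  have linear_zero : g.coeff 1 = 0 := by
    simpa [coeff_X_pow, coeff_C, show 1 ≠ p by omega, show 1 ≠ 2 * p by omega,
      show p ≠ 0 by omega] using coeff_one
  simp [linear_zero, coeff_X_pow, coeff_C, show 2 ≠ 2 * p by omega, show p ≠ 1 by omega,
    show 2 * p ≠ p + 1 by omega, show p ≠ 0 by omega]

theorem constSum_mul_coeff_quadraticSum (hn : p = 2 * n + 1) (hp3 : p ≠ 3)
    (quad_zero : quadraticSum n (0 : ZMod p) = 0) :
    constSum n (0 : ZMod p) * (quadraticSum n (X : (ZMod p)[X])).coeff 1 =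
      -3 * n.factorial ^ 2 := by
  have one_lt := (Fact.out : p.Prime).one_lt
  have deg_le : (constSum n (X : (ZMod p)[X]) * quadraticSum n X).natDegree ≤ n + (n + 1) :=
    natDegree_mul_le_of_le (natDegree_constSum_le n) (natDegree_quadraticSum_le n)
  have coeff_eq := coeff_two_eq_coeff_two_mul_of_periodic (by omega)
    (taylor_constSum_mul_quadraticSum hn hp3) (by rw [natDegree_expand]; omega)
    (by rw [coeff_expand two_pos]; simp)
  have h3 : ((3 : ZMod p) ^ n) ^ 2 = 1 := by
    rw [← pow_mul, show n * 2 = p - 1 by omega]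
    exact ZMod.pow_card_sub_one_eq_one (three_ne_zero_of_eq hn hp3)
  have sign : ((-1 : ZMod p) ^ n) ^ 2 = 1 := by rw [← pow_mul, mul_comm, pow_mul]; norm_num
  have top_coeff := coeff_mul_add_eq_of_natDegree_le (natDegree_constSum_le (R := ZMod p) n)
    (natDegree_quadraticSum_le n)
  rw [coeff_quadraticSum_succ, coeff_constSum (two_mul_add_one_eq_zero hn),
    show n + (n + 1) = p by omega] at top_coeff
  have coeff_two (Q : (ZMod p)[X]) : (expand (ZMod p) 2 Q).coeff 2 = Q.coeff 1 :=
    coeff_expand_mul two_pos Q 1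
  rw [mul_comm 2 p, coeff_expand_mul two_pos, top_coeff, coeff_two, mul_coeff_one,
    coeff_zero_eq_eval_zero, coeff_zero_eq_eval_zero, eval_constSum, eval_quadraticSum, quad_zero,
    mul_zero, add_zero] at coeff_eq
  rw [coeff_eq]
  linear_combination -3 * (n.factorial : ZMod p) ^ 2 * (((-1 : ZMod p) ^ n) ^ 2 * h3 + sign)

/-! ### Sums of inverse squares -/

/-- The harmonic sum `∑ 1 / j ^ 2` over `1 ≤ j ≤ N`, computed in `ZMod q`; it is meaningful when all
these `j` are units. -/
def invSqSum (q N : ℕ) : ZMod q := ∑ j ∈ range N, ((j + 1 : ZMod q)⁻¹) ^ 2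

theorem invSqSum_add (q c k : ℕ) :
    invSqSum q (c + k) = invSqSum q c + ∑ i ∈ range k, ((c + i + 1 : ZMod q)⁻¹) ^ 2 := by
  rw [invSqSum, sum_range_add, invSqSum]
  push_cast
  rfl

theorem sum_range_natCast_zmod {M : Type*} [AddCommMonoid M] (f : ZMod p → M) :
    ∑ j ∈ range p, f j = ∑ a : ZMod p, f a := by
  refine sum_nbij' (fun j ↦ (j : ZMod p)) ZMod.val (by simp) (by simp [ZMod.val_lt]) ?_ (by simp)
    fun _ _ ↦ rfl
  exact fun j hj ↦ ZMod.val_cast_of_lt (mem_range.mp hj)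

theorem invSqSum_sub_one (hp : 3 < p) : invSqSum p (p - 1) = 0 := by
  have sum_eq : ∑ j ∈ range p, ((j : ZMod p)⁻¹) ^ 2 = invSqSum p (p - 1) := by
    rw [show range p = range (p - 1 + 1) by congr 1; omega, sum_range_succ']
    simp [invSqSum]
  rw [← sum_eq, sum_range_natCast_zmod (fun a : ZMod p ↦ a⁻¹ ^ 2)]
  exact (Function.Bijective.sum_comp inv_involutive.bijective (fun a : ZMod p ↦ a ^ 2)).trans
    (FiniteField.sum_pow_lt_card_sub_one (ZMod p) 2 (by rw [ZMod.card]; omega))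

theorem invSqSum_eq_neg_of_add_add_one_eq (hp : 3 < p) {M N : ℕ} (h : M + N + 1 = p) :
    invSqSum p N = -invSqSum p M := by
  have reflected : ∑ i ∈ range N, ((M + i + 1 : ZMod p)⁻¹) ^ 2 = invSqSum p N := by
    rw [invSqSum, ← sum_range_reflect]
    refine sum_congr rfl fun i hi ↦ ?_
    have cast_eq : ((M + (N - 1 - i) + 1 + (i + 1) : ℕ) : ZMod p) = 0 := by
      rw [show M + (N - 1 - i) + 1 + (i + 1) = p by have := mem_range.mp hi; omega,
        ZMod.natCast_self]
    push_cast at cast_eq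
    rw [eq_neg_of_add_eq_zero_left cast_eq, inv_neg, neg_sq]
  have total := invSqSum_add p M N
  rw [show M + N = p - 1 by omega, invSqSum_sub_one hp, reflected] at total
  linear_combination -total

theorem sq_mul_sum_inv_sq {q : ZMod p} (hq : q ≠ 0) (c k : ℕ) {f : ℕ → ZMod p}
    (h : ∀ i, f i = q * (c + i + 1)) :
    q ^ 2 * ∑ i ∈ range k, (f i)⁻¹ ^ 2 = invSqSum p (c + k) - invSqSum p c := by
  rw [invSqSum_add, add_sub_cancel_left, mul_sum]
  refine sum_congr rfl fun i _ ↦ ?_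
  rw [h, mul_inv, mul_pow, ← mul_assoc, ← mul_pow, mul_inv_cancel₀ hq, one_pow, one_mul]

theorem sum_range_three_mul {M : Type*} [AddCommMonoid M] (f : ℕ → M) (a : ℕ) :
    ∑ j ∈ range (3 * a), f j =
      ∑ i ∈ range a, f (3 * i) + ∑ i ∈ range a, f (3 * i + 1) + ∑ i ∈ range a, f (3 * i + 2) := by
  induction a with
  | zero => simp
  | succ a ih =>
    rw [mul_add_one, sum_range_succ, sum_range_succ, sum_range_succ, ih, sum_range_succ,
      sum_range_succ, sum_range_succ]
    abel

theorem ten_mul_invSqSum_three_mul {a : ℕ} (hp : p = 12 * a + 1) (h3 : (3 : ZMod p) ≠ 0) :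
    10 * invSqSum p (3 * a) = invSqSum p a + invSqSum p (5 * a) := by
  have p_gt : 3 < p := by have := (Fact.out : p.Prime).two_le; omega
  have char_zero : (12 * a + 1 : ZMod p) = 0 := by
    exact_mod_cast (ZMod.natCast_eq_zero_iff _ p).mpr (dvd_of_eq hp)
  have split := sum_range_three_mul (fun j ↦ ((j + 1 : ZMod p)⁻¹) ^ 2) a
  have residue_zero := sq_mul_sum_inv_sq h3 (8 * a) a (f := fun i ↦ ((3 * i : ℕ) + 1 : ZMod p))
    fun i ↦ by push_cast; linear_combination -2 * char_zero
  have residue_one := sq_mul_sum_inv_sq h3 (4 * a) a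
    (f := fun i ↦ ((3 * i + 1 : ℕ) + 1 : ZMod p))
    fun i ↦ by push_cast; linear_combination -char_zero
  have residue_two := sq_mul_sum_inv_sq h3 0 a (f := fun i ↦ ((3 * i + 2 : ℕ) + 1 : ZMod p))
    fun i ↦ by push_cast; ring
  have reflect_three := invSqSum_eq_neg_of_add_add_one_eq p_gt
    (show 3 * a + (8 * a + a) + 1 = p by omega)
  have reflect_four := invSqSum_eq_neg_of_add_add_one_eq p_gt
    (show 4 * a + 8 * a + 1 = p by omega)
  have empty : invSqSum p 0 = 0 := sum_range_zero _
  rw [show 4 * a + a = 5 * a by ring] at residue_one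
  rw [zero_add, empty] at residue_two
  rw [← invSqSum] at split
  linear_combination 9 * split + residue_zero + residue_one + residue_two + reflect_three -
    reflect_four

theorem ten_mul_invSqSum_three_mul_add_one {a : ℕ} (hp : p = 12 * a + 5) (h3 : (3 : ZMod p) ≠ 0) :
    10 * invSqSum p (3 * a + 1) = invSqSum p a + invSqSum p (5 * a + 2) := by
  have p_gt : 3 < p := by omega
  have char_zero : (12 * a + 5 : ZMod p) = 0 := by
    exact_mod_cast (ZMod.natCast_eq_zero_iff _ p).mpr (dvd_of_eq hp)
  have split := sum_range_three_mul (fun j ↦ ((j + 1 : ZMod p)⁻¹) ^ 2) a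
  have last := invSqSum_add p (3 * a) 1
  have residue_zero := sq_mul_sum_inv_sq h3 (4 * a + 1) (a + 1)
    (f := fun i ↦ ((3 * i : ℕ) + 1 : ZMod p))
    fun i ↦ by push_cast; linear_combination -char_zero
  have residue_one := sq_mul_sum_inv_sq h3 (8 * a + 3) a
    (f := fun i ↦ ((3 * i + 1 : ℕ) + 1 : ZMod p))
    fun i ↦ by push_cast; linear_combination -2 * char_zero
  have residue_two := sq_mul_sum_inv_sq h3 0 a (f := fun i ↦ ((3 * i + 2 : ℕ) + 1 : ZMod p))
    fun i ↦ by push_cast; ring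
  have reflect_three := invSqSum_eq_neg_of_add_add_one_eq p_gt
    (show (3 * a + 1) + (8 * a + 3 + a) + 1 = p by omega)
  have reflect_four := invSqSum_eq_neg_of_add_add_one_eq p_gt
    (show (4 * a + 1) + (8 * a + 3) + 1 = p by omega)
  have empty : invSqSum p 0 = 0 := sum_range_zero _
  rw [sum_range_succ, show 4 * a + 1 + (a + 1) = 5 * a + 2 by ring] at residue_zero
  rw [zero_add, empty] at residue_two
  rw [← invSqSum] at split
  simp only [sum_range_one, Nat.cast_zero, add_zero] at last
  linear_combination 9 * last + 9 * split + residue_zero + residue_one + residue_two +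
    reflect_three - reflect_four

theorem sum_inv_twelve_mul_add_seven_sq {m : ℕ} (hp : p = 4 * m + 1) :
    72 * ∑ i ∈ range (2 * m), ((12 * i + 7 : ZMod p)⁻¹) ^ 2 = -5 * invSqSum p m := by
  have prime : p.Prime := Fact.out
  have not_three_dvd : ¬ 3 ∣ p := fun h ↦ by
    have := (Nat.prime_dvd_prime_iff_eq Nat.prime_three prime).mp h
    omega
  have p_gt : 3 < p := by have := prime.two_le; omega
  have h2 : (2 : ZMod p) ≠ 0 := by
    exact_mod_cast natCast_zmod_ne_zero_of_lt two_ne_zero (by omega : 2 < p)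
  have h3 : (3 : ZMod p) ≠ 0 := by exact_mod_cast natCast_zmod_ne_zero_of_lt three_ne_zero p_gt
  have h12 : (12 : ZMod p) ≠ 0 := by
    rw [show (12 : ZMod p) = 2 * 2 * 3 by norm_num]
    exact mul_ne_zero (mul_ne_zero h2 h2) h3
  apply mul_left_cancel₀ h2
  obtain ⟨a, rfl | rfl⟩ : ∃ a, m = 3 * a ∨ m = 3 * a + 1 := ⟨m / 3, by omega⟩
  · have char_zero : (12 * a + 1 : ZMod p) = 0 := by
      exact_mod_cast (ZMod.natCast_eq_zero_iff _ p).mpr (dvd_of_eq (by omega : p = 12 * a + 1))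
    have scaled := sq_mul_sum_inv_sq h12 (5 * a) (2 * (3 * a))
      (f := fun i ↦ (12 * i + 7 : ZMod p))
      fun i ↦ by push_cast; linear_combination -5 * char_zero
    have reflect := invSqSum_eq_neg_of_add_add_one_eq p_gt
      (show a + (5 * a + 2 * (3 * a)) + 1 = p by omega)
    linear_combination scaled + reflect + ten_mul_invSqSum_three_mul (a := a) (by omega) h3
  · have char_zero : (12 * a + 5 : ZMod p) = 0 := by
      exact_mod_cast (ZMod.natCast_eq_zero_iff _ p).mpr (dvd_of_eq (by omega : p = 12 * a + 5))
    have scaled := sq_mul_sum_inv_sq h12 a (2 * (3 * a + 1))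
      (f := fun i ↦ (12 * i + 7 : ZMod p)) fun i ↦ by linear_combination -char_zero
    have reflect := invSqSum_eq_neg_of_add_add_one_eq p_gt
      (show (5 * a + 2) + (a + 2 * (3 * a + 1)) + 1 = p by omega)
    linear_combination scaled + reflect + ten_mul_invSqSum_three_mul_add_one (a := a) (by omega) h3

/-! ### The linear coefficient of the constant sum -/

theorem coeff_one_prod_one_sub_C_mul_X {R ι : Type*} [CommRing R] (s : Finset ι) (c : ι → R) :
    (∏ i ∈ s, (1 - C (c i) * X)).coeff 1 = -∑ i ∈ s, c i := by
  classical
  induction s using Finset.induction_on with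
  | empty => simp [coeff_one]
  | insert i s hi ih =>
    rw [prod_insert hi, sum_insert hi, mul_coeff_one, ih, coeff_zero_eq_eval_zero (∏ _ ∈ _, _),
      eval_prod]
    simp [coeff_one, add_comm]

/-- The product over `i < n` of `(12 * i + 7) ^ 2 - 9 * v`. Modulo `p = 2 * n + 1` its values at
`v = w ^ 2` satisfy the same recurrence under `w ↦ w + 4` as those of `constSum n`. -/
def companionProd {R : Type*} [CommRing R] (n : ℕ) (v : R) : R :=
  ∏ i ∈ range n, ((12 * i + 7) ^ 2 - 9 * v)

theorem companionProd_shift {R : Type*} [CommRing R] (w : R) (n : ℕ) :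
    companionProd n ((w + 4) ^ 2) * ((12 * n - 5 - 3 * w) * (7 + 3 * w)) =
      companionProd n (w ^ 2) * ((-5 - 3 * w) * (12 * n + 7 + 3 * w)) := by
  induction n with
  | zero => simp [companionProd]
  | succ n ih =>
    rw [companionProd, companionProd, prod_range_succ, prod_range_succ, ← companionProd,
      ← companionProd]
    push_cast
    linear_combination (12 * n + 19 + 3 * w) * (12 * n + 7 - 3 * w) * ih

theorem constSum_X_add_four_sq (hn : p = 2 * n + 1) :
    (3 * X + 7) * (3 * X + 11) * constSum n ((X + 4) ^ 2 : (ZMod p)[X]) =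
      (3 * X + 1) * (3 * X + 5) * constSum n (X ^ 2) := by
  have h := two_mul_add_one_eq_zero (A := (ZMod p)[X]) hn
  have taylor_ofNat (k : ℕ) [k.AtLeastTwo] :
      taylor (2 : ZMod p) (ofNat(k) : (ZMod p)[X]) = ofNat(k) := by
    rw [← map_ofNat C, taylor_C]
  have shifted := congrArg (taylor 2) (constSum_X_add_two_sq h)
  simp only [taylor_mul, map_add, map_neg, taylor_constSum, taylor_quadraticSum, taylor_pow,
    taylor_X, taylor_one, taylor_ofNat, map_ofNat C, C_1] at shifted
  have := quadraticSum_X_add_two_sq h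
  rw [show (X + 2 + 2 : (ZMod p)[X]) = X + 4 by ring] at shifted
  linear_combination shifted - this

theorem taylor_four_constSum_mul_companionProd (hn : p = 2 * n + 1) (h3 : (3 : ZMod p) ≠ 0) :
    taylor 4 (constSum n (X ^ 2 : (ZMod p)[X])) * companionProd n (X ^ 2) =
      constSum n (X ^ 2) * taylor 4 (companionProd n (X ^ 2)) := by
  have h7 := three_mul_X_add_C_ne_zero h3 7
  have h11 := three_mul_X_add_C_ne_zero h3 11
  rw [map_ofNat C] at h7 h11
  apply mul_left_cancel₀ (mul_ne_zero h7 h11)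
  have taylor_prod : taylor 4 (companionProd n (X ^ 2 : (ZMod p)[X])) =
      companionProd n ((X + 4) ^ 2) := by
    simp [companionProd, taylor_apply, Polynomial.prod_comp, map_ofNat C]
  rw [taylor_prod, taylor_constSum, taylor_pow, taylor_X, map_ofNat C]
  linear_combination companionProd n (X ^ 2) * constSum_X_add_four_sq hn +
    constSum n (X ^ 2) * companionProd_shift (X : (ZMod p)[X]) n - 6 * constSum n (X ^ 2) *
      (companionProd n ((X + 4) ^ 2) * (7 + 3 * X) - companionProd n (X ^ 2) * (-5 - 3 * X)) *
      two_mul_add_one_eq_zero (A := (ZMod p)[X]) hn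

theorem companionProd_X_sq (h : ∀ i ∈ range n, (12 * i + 7 : ZMod p) ≠ 0) :
    companionProd n (X ^ 2 : (ZMod p)[X]) = C (∏ i ∈ range n, (12 * i + 7 : ZMod p) ^ 2) *
      expand (ZMod p) 2 (∏ i ∈ range n, (1 - C (9 * (12 * i + 7 : ZMod p)⁻¹ ^ 2) * X)) := by
  rw [companionProd, map_prod, map_prod, ← prod_mul_distrib]
  refine prod_congr rfl fun i hi ↦ ?_
  rw [map_sub, map_one, map_mul, expand_C, expand_X, mul_sub, ← mul_assoc, ← C_mul, mul_left_comm,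
    ← mul_pow, mul_inv_cancel₀ (h i hi)]
  simp [map_ofNat C]

theorem constSum_X_eq_C_mul_prod (hn : p = 2 * n + 1) (h4 : p % 4 = 1) :
    constSum n (X : (ZMod p)[X]) = C (constSum n 0) *
      ∏ i ∈ range n, (1 - C (9 * (12 * i + 7 : ZMod p)⁻¹ ^ 2) * X) := by
  have four_ne_zero : (4 : ZMod p) ≠ 0 := by
    rw [show (4 : ZMod p) = 2 * 2 by norm_num]
    exact mul_ne_zero (two_ne_zero_of_eq hn) (two_ne_zero_of_eq hn)
  have root_ne_zero : ∀ i ∈ range n, (12 * i + 7 : ZMod p) ≠ 0 := fun i hi ↦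
    twelve_mul_add_seven_ne_zero h4 (by have := mem_range.mp hi; omega)
  set K := ∏ i ∈ range n, (12 * i + 7 : ZMod p) ^ 2
  have K_ne_zero : K ≠ 0 := prod_ne_zero_iff.mpr fun i hi ↦ pow_ne_zero 2 (root_ne_zero i hi)
  set G := ∏ i ∈ range n, (1 - C (9 * (12 * i + 7 : ZMod p)⁻¹ ^ 2) * X) with G_def
  have G_eval : (expand (ZMod p) 2 G).eval 0 = 1 := by simp [G_def, eval_prod]
  have G_ne_zero : expand (ZMod p) 2 G ≠ 0 := fun h ↦ by simp [h] at G_eval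
  have G_deg : G.natDegree ≤ n := by
    refine (natDegree_prod_le _ _).trans ((sum_le_card_nsmul _ _ 1 fun i _ ↦ ?_).trans (by simp))
    rw [← neg_add_eq_sub, ← neg_mul, ← C_neg, ← C_1]
    exact natDegree_linear_le
  have constSum_deg := natDegree_constSum_le (R := ZMod p) n
  have comm := taylor_four_constSum_mul_companionProd hn
    (three_ne_zero_of_eq hn (by rintro rfl; omega))
  rw [companionProd_X_sq root_ne_zero, ← expand_constSum] at comm
  have proportional := C_eval_zero_mul_eq_of_taylor_mul_comm four_ne_zero
    (mul_ne_zero (C_ne_zero.mpr K_ne_zero) G_ne_zero) comm (by rw [natDegree_expand]; omega)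
    (by rw [natDegree_C_mul K_ne_zero, natDegree_expand]; omega)
  rw [eval_mul, eval_C, G_eval, mul_one, mul_left_comm] at proportional
  apply expand_injective two_pos
  rw [mul_left_cancel₀ (C_ne_zero.mpr K_ne_zero) proportional, map_mul, expand_C, expand_eval,
    eval_constSum]
  simp

theorem eight_mul_coeff_one_constSum {m : ℕ} (hp : p = 4 * m + 1) :
    8 * (constSum (2 * m) (X : (ZMod p)[X])).coeff 1 =
      5 * constSum (2 * m) 0 * invSqSum p m := by
  rw [constSum_X_eq_C_mul_prod (by omega) (by omega), coeff_C_mul, coeff_one_prod_one_sub_C_mul_X,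
    ← mul_sum]
  linear_combination -constSum (2 * m) (0 : ZMod p) * sum_inv_twelve_mul_add_seven_sq hp

end ModPrime

section FactorialIdentities

open Finset Nat

variable {R : Type*} [CommRing R]

theorem factorial_mul_prod_add_one_add (q l : ℕ) :
    (q ! : R) * ∏ i ∈ range l, (q + 1 + i : R) = (q + l)! := by
  rw [← factorial_mul_ascFactorial, ascFactorial_eq_prod_range]
  push_cast
  rfl

theorem prod_add_one_add_sub (q l : ℕ) (x : R) :
    ∏ i ∈ range l, (q + 1 + i - x) = (-1) ^ l * ∏ i ∈ range l, (x - q - l + i) := by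
  rw [← prod_range_reflect, ← card_range l, ← prod_const, card_range, ← prod_mul_distrib]
  refine prod_congr rfl fun i hi ↦ ?_
  have : 1 + i ≤ l := by have := mem_range.mp hi; omega
  rw [Nat.sub_sub]
  push_cast [this]
  ring

theorem factorial_add_eq_mul_prod {q l n : ℕ} (h : q + l = n) :
    ((n + l)! : R) = n ! * ((-1) ^ l * ∏ i ∈ range l, (q + 1 + i - (2 * n + 1) : R)) := by
  rw [prod_add_one_add_sub, ← mul_assoc ((-1) ^ l), ← mul_pow, neg_one_mul, neg_neg, one_pow,
    one_mul, ← factorial_mul_prod_add_one_add]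
  congr 1
  refine prod_congr rfl fun i _ ↦ ?_
  rw [← h]
  push_cast
  ring

theorem mul_prod_sub_sq {ι : Type*} {x : R} (hx : x ^ 3 = 0) (s : Finset ι) (a : ι → R) :
    x * ∏ i ∈ s, (a i - x ^ 2) = x * ∏ i ∈ s, a i := by
  classical
  induction s using Finset.induction_on with
  | empty => rfl
  | insert i s hi ih =>
    rw [prod_insert hi, prod_insert hi]
    linear_combination a i * ih - (∏ j ∈ s, (a j - x ^ 2)) * hx

theorem factorial_three_mul_add_one {n : ℕ} (h : (2 * n + 1 : R) ^ 3 = 0) :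
    ((3 * n + 1)! : R) = (-1) ^ n * (2 * n + 1) * n ! ^ 3 := by
  set x : R := 2 * n + 1 with hx
  have factorial_sq : ∏ i ∈ range n, (i + 1 : R) ^ 2 = n ! ^ 2 := by
    rw [prod_pow, ← prod_range_add_one_eq_factorial]
    push_cast
    rfl
  have middle : ((n + n)! : R) = n ! * ((-1) ^ n * ∏ i ∈ range n, (i + 1 - x)) := by
    rw [factorial_add_eq_mul_prod (zero_add n)]
    simp only [Nat.cast_zero, zero_add, add_comm (1 : R), hx]
  have upper : ((3 * n + 1)! : R) = (n + n)! * x * ∏ i ∈ range n, (i + 1 + x) := by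
    rw [show 3 * n + 1 = (2 * n + 1) + n by ring, ← factorial_mul_prod_add_one_add, factorial_succ,
      two_mul n]
    push_cast
    rw [← two_mul, ← hx, mul_comm x]
    congr 1
    exact prod_congr rfl fun i _ ↦ by ring
  calc ((3 * n + 1)! : R)
      = (-1) ^ n * n ! * (x * ((∏ i ∈ range n, (i + 1 - x)) * ∏ i ∈ range n, (i + 1 + x))) := by
        rw [upper, middle]
        ring
    _ = (-1) ^ n * n ! * (x * ∏ i ∈ range n, ((i + 1 : R) ^ 2 - x ^ 2)) := by
        rw [← prod_mul_distrib]
        congr! 3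
        ring
    _ = (-1) ^ n * x * n ! ^ 3 := by
        rw [mul_prod_sub_sq h, factorial_sq]
        ring

theorem factorial_two_mul_eq_centralBinom_mul {R : Type*} [CommSemiring R] (m : ℕ) :
    ((2 * m)! : R) = m.centralBinom * m ! ^ 2 := by
  have h := choose_mul_factorial_mul_factorial (show m ≤ 2 * m by omega)
  rw [show 2 * m - m = m by omega, ← centralBinom] at h
  rw [← h]
  push_cast
  ring

theorem factorial_two_mul_add_one_eq_choose_mul (m : ℕ) :
    ((2 * m + 1)! : R) = (2 * m + 1).choose m * (m + 1) * m ! ^ 2 := by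
  have h := choose_mul_factorial_mul_factorial (show m ≤ 2 * m + 1 by omega)
  rw [show 2 * m + 1 - m = m + 1 by omega, factorial_succ m] at h
  rw [← h]
  push_cast
  ring

theorem two_pow_mul_factorial_mul_prod_odd (q : ℕ) :
    2 ^ q * q ! * ∏ i ∈ range q, (2 * i + 1) = (2 * q)! := by
  induction q with
  | zero => rfl
  | succ q ih =>
    rw [mul_add_one, factorial_succ (2 * q + 1), factorial_succ (2 * q), ← ih, prod_range_succ,
      factorial_succ]
    ring

theorem two_pow_mul_prod_odd {q l : ℕ} (h : l = q ∨ l = q + 1) :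
    2 ^ q * ∏ i ∈ range l, (2 * i + 1) = ∏ i ∈ range l, (q + 1 + i) := by
  apply mul_left_cancel₀ (factorial_ne_zero q)
  have := factorial_mul_prod_add_one_add (R := ℤ) q l
  norm_cast at this
  rw [this]
  have even_case := two_pow_mul_factorial_mul_prod_odd q
  rcases h with rfl | rfl
  · rw [← two_mul, ← even_case]
    ring
  · rw [← add_assoc, ← two_mul, factorial_succ, ← even_case, prod_range_succ]
    ring

theorem two_pow_mul_prod_two_mul_sub {q l n : ℕ} (hn : q + l = n) (hl : l = q ∨ l = q + 1) :
    2 ^ q * ∏ i ∈ range l, (2 * (q + 1 + i) - (2 * n + 1) : R) =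
      (-1) ^ l * ∏ i ∈ range l, (q + 1 + i : R) := by
  have odd_prod :
      (2 : R) ^ q * ∏ i ∈ range l, (2 * i + 1 : R) = ∏ i ∈ range l, (q + 1 + i : R) := by
    exact_mod_cast congrArg (Nat.cast : ℕ → R) (two_pow_mul_prod_odd hl)
  have reflected : ∏ i ∈ range l, (2 * (q + 1 + i) - (2 * n + 1) : R) =
      (-1) ^ l * ∏ i ∈ range l, (2 * i + 1 : R) := by
    rw [← prod_range_reflect, ← card_range l, ← prod_const, card_range, ← prod_mul_distrib]
    refine prod_congr rfl fun i hi ↦ ?_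
    have : 1 + i ≤ l := by have := mem_range.mp hi; omega
    rw [Nat.sub_sub, ← hn]
    push_cast [this]
    ring
  rw [reflected, ← odd_prod]
  ring

theorem prod_one_add_mul_of_sq_eq_zero {ι : Type*} {x : R} (hx : x ^ 2 = 0) (s : Finset ι)
    (c : ι → R) : ∏ i ∈ s, (1 + x * c i) = 1 + x * ∑ i ∈ s, c i := by
  classical
  induction s using Finset.induction_on with
  | empty => simp
  | insert i s hi ih =>
    rw [prod_insert hi, sum_insert hi, ih]
    linear_combination c i * (∑ j ∈ s, c j) * hx

theorem two_mul_prod_one_add_mul {ι : Type*} {x : R} (hx : x ^ 3 = 0) (s : Finset ι) (c : ι → R) :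
    2 * ∏ i ∈ s, (1 + x * c i) =
      2 + 2 * x * ∑ i ∈ s, c i + x ^ 2 * ((∑ i ∈ s, c i) ^ 2 - ∑ i ∈ s, c i ^ 2) := by
  classical
  induction s using Finset.induction_on with
  | empty => simp
  | insert i s hi ih =>
    rw [prod_insert hi, sum_insert hi, sum_insert hi]
    linear_combination (1 + x * c i) * ih +
      c i * ((∑ j ∈ s, c j) ^ 2 - ∑ j ∈ s, c j ^ 2) * hx

end FactorialIdentities

section PrimePowerResidues

open Finset Nat

variable {p r : ℕ}

theorem natCast_pow_zmod_self (p r : ℕ) : (p : ZMod (p ^ r)) ^ r = 0 := by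
  exact_mod_cast ZMod.natCast_self (p ^ r)

theorem natCast_cube_eq_zero (hr : r ≤ 3) : (p : ZMod (p ^ r)) ^ 3 = 0 :=
  pow_eq_zero_of_le hr (natCast_pow_zmod_self p r)

/-- Reduction modulo `p` of residues modulo `p ^ r`. -/
def reduction (p r : ℕ) [NeZero r] : ZMod (p ^ r) →+* ZMod p :=
  ZMod.castHom (dvd_pow_self p (NeZero.ne r)) (ZMod p)

theorem natCast_dvd_sub_of_reduction_eq [NeZero r] {a b : ZMod (p ^ r)}
    (h : reduction p r a = reduction p r b) : (p : ZMod (p ^ r)) ∣ a - b := by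
  have hab : reduction p r (a - b) = 0 := by rw [map_sub, h, sub_self]
  obtain ⟨z, hz⟩ := ZMod.intCast_surjective (a - b)
  rw [← hz, map_intCast, ZMod.intCast_zmod_eq_zero_iff_dvd] at hab
  rw [← hz]
  exact_mod_cast Int.cast_dvd_cast _ _ hab

theorem natCast_pow_mul_eq_of_reduction_eq [NeZero r] {a b : ZMod (p ^ r)}
    (h : reduction p r a = reduction p r b) :
    (p : ZMod (p ^ r)) ^ (r - 1) * a = (p : ZMod (p ^ r)) ^ (r - 1) * b := by
  obtain ⟨c, hc⟩ := natCast_dvd_sub_of_reduction_eq h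
  have hp : (p : ZMod (p ^ r)) ^ (r - 1) * p = 0 := by
    rw [← pow_succ, Nat.sub_add_cancel NeZero.one_le, natCast_pow_zmod_self]
  linear_combination c * hp + (p : ZMod (p ^ r)) ^ (r - 1) * hc

variable [Fact p.Prime]

theorem coprime_pow_of_lt {k : ℕ} (hk : k ≠ 0) (hkp : k < p) : k.Coprime (p ^ r) :=
  (coprime_of_lt_prime hk hkp Fact.out).symm.pow_right r

theorem isUnit_natCast_of_lt {k : ℕ} (hk : k ≠ 0) (hkp : k < p) : IsUnit (k : ZMod (p ^ r)) :=
  (ZMod.isUnit_iff_coprime k _).mpr (coprime_pow_of_lt hk hkp)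

theorem natCast_mul_inv_of_lt {k : ℕ} (hk : k ≠ 0) (hkp : k < p) :
    (k : ZMod (p ^ r)) * (k : ZMod (p ^ r))⁻¹ = 1 :=
  ZMod.coe_mul_inv_eq_one k (coprime_pow_of_lt hk hkp)

theorem isUnit_two (hp2 : p ≠ 2) : IsUnit (2 : ZMod (p ^ r)) := by
  exact_mod_cast isUnit_natCast_of_lt two_ne_zero
    (lt_of_le_of_ne (Fact.out : p.Prime).two_le hp2.symm)

theorem isUnit_factorial_of_lt {k : ℕ} (hkp : k < p) : IsUnit (k ! : ZMod (p ^ r)) :=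
  (ZMod.isUnit_iff_coprime _ _).mpr
    (((Fact.out : p.Prime).coprime_factorial_of_lt hkp).symm.pow_right r)

theorem isUnit_of_reduction_ne_zero [NeZero r] {a : ZMod (p ^ r)} (h : reduction p r a ≠ 0) :
    IsUnit a := by
  obtain ⟨z, rfl⟩ := ZMod.natCast_zmod_surjective a
  rw [map_natCast, Ne, ZMod.natCast_eq_zero_iff, ← (Fact.out : p.Prime).coprime_iff_not_dvd] at h
  exact (ZMod.isUnit_iff_coprime z _).mpr (h.symm.pow_right r)

theorem reduction_natCast_inv [NeZero r] {k : ℕ} (hk : k ≠ 0) (hkp : k < p) :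
    reduction p r (k : ZMod (p ^ r))⁻¹ = (k : ZMod p)⁻¹ := by
  have h := congrArg (reduction p r) (natCast_mul_inv_of_lt hk hkp)
  rw [map_mul, map_one, map_natCast] at h
  exact eq_inv_of_mul_eq_one_right h

theorem reduction_invSqSum [NeZero r] {N : ℕ} (hN : N < p) :
    reduction p r (invSqSum (p ^ r) N) = invSqSum p N := by
  rw [invSqSum, invSqSum, map_sum]
  refine sum_congr rfl fun j hj ↦ ?_
  have inv := reduction_natCast_inv (p := p) (r := r) j.succ_ne_zero
    (by have := mem_range.mp hj; omega)
  push_cast at inv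
  rw [map_pow, inv]

theorem natCast_sq_mul_invSqSum_half {n : ℕ} (hp : 3 < p) (hn : p = 2 * n + 1) :
    (p : ZMod (p ^ 3)) ^ 2 * invSqSum (p ^ 3) n = 0 := by
  have half : 2 * invSqSum p n = 0 := by
    linear_combination invSqSum_eq_neg_of_add_add_one_eq hp (show n + n + 1 = p by omega)
  have red : reduction p 3 (invSqSum (p ^ 3) n) = reduction p 3 0 := by
    rw [reduction_invSqSum (by omega), map_zero]
    exact (mul_eq_zero.mp half).resolve_left (two_ne_zero_of_eq hn)
  simpa using natCast_pow_mul_eq_of_reduction_eq red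

/-! ### Products of `1 + x / j` over an interval -/

/-- The sum of `1 / j` over `q < j ≤ q + l`, modulo `N`. -/
def invSum (N q l : ℕ) : ZMod N := ∑ i ∈ range l, (q + 1 + i : ZMod N)⁻¹

/-- The product of `1 + x / j` over `q < j ≤ q + l`, modulo `N`. -/
def ratioProd (N q l : ℕ) (x : ZMod N) : ZMod N :=
  ∏ i ∈ range l, (1 + x * (q + 1 + i : ZMod N)⁻¹)

theorem ratioProd_of_sq_eq_zero {N : ℕ} {x : ZMod N} (hx : x ^ 2 = 0) (q l : ℕ) :
    ratioProd N q l x = 1 + x * invSum N q l :=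
  prod_one_add_mul_of_sq_eq_zero hx _ _

theorem two_mul_ratioProd_natCast_mul {m : ℕ} (hp : p = 4 * m + 1) (c : ZMod (p ^ 3)) :
    2 * ratioProd (p ^ 3) m m ((p : ZMod (p ^ 3)) * c) =
      2 + 2 * (p : ZMod (p ^ 3)) * c * invSum (p ^ 3) m m +
        (p : ZMod (p ^ 3)) ^ 2 * c ^ 2 * (invSum (p ^ 3) m m ^ 2 + invSqSum (p ^ 3) m) := by
  have hp1 := (Fact.out : p.Prime).one_lt
  have expansion := two_mul_prod_one_add_mul (x := (p * c : ZMod (p ^ 3)))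
    (by rw [mul_pow, natCast_pow_zmod_self, zero_mul]) (range m)
    (fun i ↦ (m + 1 + i : ZMod (p ^ 3))⁻¹)
  have sum_sq := natCast_sq_mul_invSqSum_half (n := 2 * m) (show 3 < p by omega) (by omega)
  rw [two_mul m, invSqSum_add] at sum_sq
  simp only [ratioProd, invSum, add_right_comm (m : ZMod (p ^ 3)) 1] at expansion ⊢
  linear_combination expansion - c ^ 2 * sum_sq

variable {q l n : ℕ}

theorem prod_mul_ratioProd (h : q + l < p) (x : ZMod (p ^ r)) :
    (∏ i ∈ range l, (q + 1 + i : ZMod (p ^ r))) * ratioProd (p ^ r) q l x =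
      ∏ i ∈ range l, (q + 1 + i + x) := by
  rw [ratioProd, ← prod_mul_distrib]
  refine prod_congr rfl fun i hi ↦ ?_
  have inv := natCast_mul_inv_of_lt (p := p) (r := r) (k := q + 1 + i) (by omega)
    (by have := mem_range.mp hi; omega)
  push_cast at inv
  linear_combination x * inv

theorem factorial_mul_factorial_add (hp : p = 2 * n + 1) (hn : q + l = n) :
    (q ! * (n + l)! : ZMod (p ^ r)) = (-1) ^ l * n ! ^ 2 * ratioProd (p ^ r) q l (-p) := by
  have ratio := prod_mul_ratioProd (r := r) (show q + l < p by omega) (-p)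
  rw [show (-p : ZMod (p ^ r)) = -(2 * n + 1) by rw [hp]; push_cast; rfl] at ratio ⊢
  have lower := factorial_mul_prod_add_one_add (R := ZMod (p ^ r)) q l
  rw [factorial_add_eq_mul_prod hn]
  simp only [sub_eq_add_neg]
  rw [← ratio]
  rw [hn] at lower
  linear_combination (-1) ^ l * n ! * ratioProd (p ^ r) q l (-(2 * n + 1)) * lower

theorem two_pow_mul_ratioProd (hp : p = 2 * n + 1) (hn : q + l = n) (hl : l = q ∨ l = q + 1) :
    2 ^ n * ratioProd (p ^ r) q l (p * -(2 : ZMod (p ^ r))⁻¹) = (-1) ^ l := by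
  have hp1 := (Fact.out : p.Prime).one_lt
  have inv_two := natCast_mul_inv_of_lt (p := p) (r := r) two_ne_zero (by omega)
  have ratio := prod_mul_ratioProd (r := r) (show q + l < p by omega) (p * -(2 : ZMod (p ^ r))⁻¹)
  have lower := factorial_mul_prod_add_one_add (R := ZMod (p ^ r)) q l
  have prod_unit : IsUnit (∏ i ∈ range l, (q + 1 + i : ZMod (p ^ r))) :=
    isUnit_of_mul_isUnit_right (lower ▸ isUnit_factorial_of_lt (by omega))
  have doubled : ∏ i ∈ range l, (2 * (q + 1 + i) - (2 * n + 1) : ZMod (p ^ r)) =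
      2 ^ l * ∏ i ∈ range l, (q + 1 + i + p * -(2 : ZMod (p ^ r))⁻¹) := by
    rw [← card_range l, ← prod_const, card_range, ← prod_mul_distrib]
    refine prod_congr rfl fun i _ ↦ ?_
    have hp' : (p : ZMod (p ^ r)) = 2 * n + 1 := by rw [hp]; push_cast; rfl
    push_cast at inv_two
    linear_combination (p : ZMod (p ^ r)) * inv_two + hp'
  have odd_prod := two_pow_mul_prod_two_mul_sub (R := ZMod (p ^ r)) hn hl
  rw [doubled, ← ratio] at odd_prod
  refine prod_unit.mul_left_cancel ?_
  rw [← hn, pow_add]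
  linear_combination odd_prod

theorem two_pow_sub_one_mul_ratioProd_sq (hp : p = 2 * n + 1) (hn : q + l = n)
    (hl : l = q ∨ l = q + 1) :
    2 ^ (p - 1) * ratioProd (p ^ r) q l (p * -(2 : ZMod (p ^ r))⁻¹) ^ 2 = 1 := by
  rw [show p - 1 = n * 2 by omega, pow_mul, ← mul_pow, two_pow_mul_ratioProd hp hn hl, ← pow_mul,
    mul_comm, pow_mul, neg_one_sq, one_pow]

end PrimePowerResidues

section CentralBinomSums

open Finset Nat

theorem neg_eight_pow_mul_perturbedTerm_zero {R : Type*} [CommRing R] {n k : ℕ} (hk : k ≤ n) :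
    (-8) ^ k * perturbedTerm n (0 : R) k = (n ! * k.centralBinom) ^ 3 := by
  have odd_prod : (2 : R) ^ k * ∏ j ∈ range k, (2 * j + 1 : R) = k.centralBinom * k ! := by
    have h : 2 ^ k * ∏ j ∈ range k, (2 * j + 1) = k.centralBinom * k ! := by
      apply mul_left_cancel₀ (factorial_ne_zero k)
      have central := factorial_two_mul_eq_centralBinom_mul (R := ℤ) k
      norm_cast at central
      linarith [two_pow_mul_factorial_mul_prod_odd k]
    exact_mod_cast congrArg (Nat.cast : ℕ → R) h
  have factorial_split : (n ! : R) = k ! * ∏ j ∈ Ico k n, (j + 1 : R) := by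
    rw [← prod_range_add_one_eq_factorial, ← prod_range_mul_prod_Ico _ hk,
      prod_range_add_one_eq_factorial]
    push_cast
    rfl
  have numerators : (-8) ^ k * ∏ j ∈ range k, numFactor (0 : R) j =
      (2 ^ k * ∏ j ∈ range k, (2 * j + 1 : R)) ^ 3 := by
    rw [mul_pow, ← pow_mul, mul_comm k, pow_mul, ← prod_pow, ← card_range k, ← prod_const,
      ← prod_const, card_range, ← prod_mul_distrib, ← prod_mul_distrib]
    refine prod_congr rfl fun j _ ↦ ?_
    rw [numFactor]
    ring
  have denominators : ∏ j ∈ Ico k n, denFactor (0 : R) j = (∏ j ∈ Ico k n, (j + 1 : R)) ^ 3 := by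
    rw [← prod_pow]
    refine prod_congr rfl fun j _ ↦ ?_
    rw [denFactor]
    ring
  rw [perturbedTerm, ← mul_assoc, numerators, denominators, odd_prod, factorial_split]
  ring

variable {p r n : ℕ}

/-- The residue of `C(2k, k) ^ 3 / (-8) ^ k` modulo `p ^ r`, for `p` odd. -/
def centralBinomTerm (p r k : ℕ) : ZMod (p ^ r) := k.centralBinom ^ 3 * ((-8)⁻¹) ^ k

/-- The residue of the sum of `k ^ j * C(2k, k) ^ 3 / (-8) ^ k` over `k < p` modulo `p ^ r`, for
`p` odd. -/
def centralBinomSum (p r j : ℕ) : ZMod (p ^ r) := ∑ k ∈ range p, k ^ j * centralBinomTerm p r k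

variable [Fact p.Prime]

theorem isUnit_neg_eight (hp2 : p ≠ 2) : IsUnit (-8 : ZMod (p ^ r)) := by
  rw [show (-8 : ZMod (p ^ r)) = -2 ^ 3 by norm_num]
  exact ((isUnit_two hp2).pow 3).neg

theorem neg_eight_pow_mul_centralBinomTerm (hp2 : p ≠ 2) (k : ℕ) :
    (-8) ^ k * centralBinomTerm p r k = k.centralBinom ^ 3 := by
  rw [centralBinomTerm, mul_left_comm, ← mul_pow,
    ZMod.mul_inv_of_unit _ (isUnit_neg_eight hp2), one_pow, mul_one]

theorem centralBinomTerm_succ (hp2 : p ≠ 2) (k : ℕ) :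
    (k + 1 : ZMod (p ^ r)) ^ 3 * centralBinomTerm p r (k + 1) =
      -(2 * k + 1) ^ 3 * centralBinomTerm p r k := by
  have central : ((k + 1) * (k + 1).centralBinom : ZMod (p ^ r)) =
      2 * (2 * k + 1) * k.centralBinom := by
    exact_mod_cast congrArg (Nat.cast : ℕ → ZMod (p ^ r)) (succ_mul_centralBinom_succ k)
  apply ((isUnit_neg_eight hp2).pow (k + 1)).mul_left_cancel
  rw [mul_left_comm, neg_eight_pow_mul_centralBinomTerm hp2, ← mul_pow, central]
  linear_combination -8 * (2 * k + 1 : ZMod (p ^ r)) ^ 3 * neg_eight_pow_mul_centralBinomTerm hp2 k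

theorem centralBinomTerm_eq_zero (hr : r ≤ 3) (hn : p = 2 * n + 1) {k : ℕ} (hk : n < k)
    (hkp : k < p) : centralBinomTerm p r k = 0 := by
  have hdvd : p ∣ k.centralBinom :=
    (Fact.out : p.Prime).dvd_choose hkp (by omega) (by omega)
  obtain ⟨c, hc⟩ := hdvd
  rw [centralBinomTerm, hc, Nat.cast_mul, mul_pow, natCast_cube_eq_zero hr, zero_mul, zero_mul]

theorem centralBinomSum_telescope (hr : r ≤ 3) (hp2 : p ≠ 2) :
    9 * centralBinomSum p r 3 + 12 * centralBinomSum p r 2 + 6 * centralBinomSum p r 1 +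
      centralBinomSum p r 0 = 0 := by
  have partial_sum (N : ℕ) :
      ∑ k ∈ range N, (9 * k ^ 3 + 12 * k ^ 2 + 6 * k + 1) * centralBinomTerm p r k =
        -N ^ 3 * centralBinomTerm p r N := by
    induction N with
    | zero => simp
    | succ N ih =>
      rw [sum_range_succ, ih]
      push_cast
      linear_combination centralBinomTerm_succ (r := r) hp2 N
  have full := partial_sum p
  rw [natCast_cube_eq_zero hr, neg_zero, zero_mul] at full
  rw [← full]
  simp only [centralBinomSum, mul_sum, ← sum_add_distrib]
  exact sum_congr rfl fun k _ ↦ by ring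

theorem weightedSum_zero (hr : r ≤ 3) (hn : p = 2 * n + 1) (c : ℕ → ZMod (p ^ r)) :
    weightedSum c n 0 = n ! ^ 3 * ∑ k ∈ range p, c k * centralBinomTerm p r k := by
  have hp2 : p ≠ 2 := by omega
  have truncate : ∑ k ∈ range (n + 1), c k * centralBinomTerm p r k =
      ∑ k ∈ range p, c k * centralBinomTerm p r k := by
    refine sum_subset (range_subset_range.mpr (by omega)) fun k hk hkn ↦ ?_
    rw [mem_range] at hk hkn
    rw [centralBinomTerm_eq_zero hr hn (by omega) hk, mul_zero]
  rw [← truncate, weightedSum, mul_sum]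
  refine sum_congr rfl fun k hk ↦ ?_
  have term : perturbedTerm n 0 k = n ! ^ 3 * centralBinomTerm p r k := by
    apply ((isUnit_neg_eight hp2).pow k).mul_left_cancel
    rw [neg_eight_pow_mul_perturbedTerm_zero (mem_range_succ_iff.mp hk), mul_left_comm,
      neg_eight_pow_mul_centralBinomTerm hp2, mul_pow]
  rw [term]
  ring

theorem constSum_zero (hr : r ≤ 3) (hn : p = 2 * n + 1) :
    constSum n (0 : ZMod (p ^ r)) = n ! ^ 3 * centralBinomSum p r 0 := by
  simp only [constSum, weightedSum_zero hr hn, centralBinomSum, pow_zero]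

theorem linearSum_zero (hr : r ≤ 3) (hn : p = 2 * n + 1) :
    linearSum n (0 : ZMod (p ^ r)) =
      n ! ^ 3 * (3 * centralBinomSum p r 1 + centralBinomSum p r 0) := by
  simp only [linearSum, weightedSum_zero hr hn, centralBinomSum, mul_sum, ← sum_add_distrib]
  exact sum_congr rfl fun k _ ↦ by ring

theorem quadraticSum_zero (hr : r ≤ 3) (hn : p = 2 * n + 1) :
    quadraticSum n (0 : ZMod (p ^ r)) = n ! ^ 3 *
      (18 * centralBinomSum p r 2 + 14 * centralBinomSum p r 1 + 3 * centralBinomSum p r 0) := by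
  simp only [quadraticSum, weightedSum_zero hr hn, centralBinomSum, mul_sum, ← sum_add_distrib]
  exact sum_congr rfl fun k _ ↦ by ring

end CentralBinomSums

section Supercongruences

open Finset Nat Polynomial

theorem eval_eq_add_of_sq_eq_zero {R : Type*} [CommRing R] {y : R} (hy : y ^ 2 = 0) (f : R[X]) :
    f.eval y = f.eval 0 + f.coeff 1 * y := by
  simpa [← coeff_zero_eq_eval_zero, coeff_derivative] using eval_add_of_sq_eq_zero f 0 y hy

theorem map_coeff_linearSum {R S : Type*} [CommRing R] [CommRing S] (f : R →+* S) (n j : ℕ) :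
    f ((linearSum n (X : R[X])).coeff j) = (linearSum n (X : S[X])).coeff j := by
  simpa [coeff_map] using congrArg (coeff · j) (map_linearSum (mapRingHom f) n X)

theorem map_coeff_constSum {R S : Type*} [CommRing R] [CommRing S] (f : R →+* S) (n j : ℕ) :
    f ((constSum n (X : R[X])).coeff j) = (constSum n (X : S[X])).coeff j := by
  simpa [coeff_map] using congrArg (coeff · j) (map_constSum (mapRingHom f) n X)

theorem map_coeff_quadraticSum {R S : Type*} [CommRing R] [CommRing S] (f : R →+* S) (n j : ℕ) :
    f ((quadraticSum n (X : R[X])).coeff j) = (quadraticSum n (X : S[X])).coeff j := by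
  simpa [coeff_map] using congrArg (coeff · j) (map_quadraticSum (mapRingHom f) n X)

variable {p r n : ℕ} [Fact p.Prime]

theorem centralBinomSum_linear_relation (hr : r ≤ 3) (hn : p = 2 * n + 1)
    (unperturbed : linearSum n ((p : ZMod (p ^ r)) ^ 2) = linearSum n 0) :
    3 * centralBinomSum p r 1 + centralBinomSum p r 0 = (-1) ^ n * p := by
  have hpn : (p : ZMod (p ^ r)) = 2 * n + 1 := by exact_mod_cast congrArg Nat.cast hn
  have cube := natCast_cube_eq_zero (p := p) hr
  rw [linearSum_zero hr hn, hpn, linearSum_odd_sq, factorial_three_mul_add_one (hpn ▸ cube),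
    ← hpn] at unperturbed
  apply ((isUnit_factorial_of_lt (show n < p by omega)).pow 3).mul_left_cancel
  linear_combination -unperturbed

/-! ### Primes congruent to `3` modulo `4` -/

variable {m : ℕ}

theorem centralBinomSum_zero_eq_zero (hp : p = 4 * m + 3) : centralBinomSum p 2 0 = 0 := by
  have hpm : (p : ZMod (p ^ 2)) = 4 * m + 3 := by exact_mod_cast congrArg Nat.cast hp
  have closed := constSum_two_mul_add_one_odd_sq (R := ZMod (p ^ 2)) m
  rw [← hpm, natCast_pow_zmod_self, constSum_zero (by norm_num) (by omega)] at closed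
  have unit := (isUnit_factorial_of_lt (r := 2) (show 2 * m + 1 < p by omega)).pow 3
  exact (unit.mul_right_eq_zero).mp closed

theorem three_mul_centralBinomSum_one (hp : p = 4 * m + 3) : 3 * centralBinomSum p 2 1 = -p := by
  have linear := centralBinomSum_linear_relation (r := 2) (n := 2 * m + 1) (by norm_num)
    (show p = 2 * (2 * m + 1) + 1 by omega) (by rw [natCast_pow_zmod_self])
  rw [centralBinomSum_zero_eq_zero hp, Odd.neg_one_pow ⟨m, rfl⟩] at linear
  linear_combination linear

theorem sq_factorial_mul_factorial_three_mul_add_two (hp : p = 4 * m + 3) :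
    (m ! * (3 * m + 2)! : ZMod (p ^ 2)) ^ 2 =
      ((2 * m + 1)! : ZMod (p ^ 2)) ^ 4 *
        (1 - 2 * (p : ZMod (p ^ 2)) * invSum (p ^ 2) m (m + 1)) := by
  have P2 := natCast_pow_zmod_self p 2
  rw [show 3 * m + 2 = 2 * m + 1 + (m + 1) by ring,
    factorial_mul_factorial_add (show p = 2 * (2 * m + 1) + 1 by omega) (by ring),
    ratioProd_of_sq_eq_zero (by rw [neg_sq, P2]), mul_pow, mul_pow, ← pow_mul, mul_comm (m + 1),
    pow_mul, neg_one_sq, one_pow]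
  linear_combination (((2 * m + 1)! : ZMod (p ^ 2)) ^ 4 * invSum (p ^ 2) m (m + 1) ^ 2) * P2

theorem centralBinomSum_two_eq_two_pow_mul (hp : p = 4 * m + 3) :
    18 * centralBinomSum p 2 2 + 14 * centralBinomSum p 2 1 =
      2 ^ (p - 1) * (1 + 2 * (p : ZMod (p ^ 2))) *
        (1 - 2 * (p : ZMod (p ^ 2)) * invSum (p ^ 2) m (m + 1)) *
        ((2 * m + 1).choose m : ZMod (p ^ 2)) ^ 2 := by
  have hpm : (p : ZMod (p ^ 2)) = 4 * m + 3 := by exact_mod_cast congrArg Nat.cast hp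
  have P2 := natCast_pow_zmod_self p 2
  have closed := quadraticSum_two_mul_add_one_odd_sq (R := ZMod (p ^ 2)) m
  rw [← hpm, P2, quadraticSum_zero (by norm_num) (by omega), centralBinomSum_zero_eq_zero hp,
    show 16 ^ (m + 1) = (4 * 2 ^ (p - 1) : ZMod (p ^ 2)) by
      rw [show p - 1 = 4 * m + 2 by omega, pow_add _ (4 * m), pow_mul]; ring] at closed
  have upper_sq := sq_factorial_mul_factorial_three_mul_add_two hp
  have choose := factorial_two_mul_add_one_eq_choose_mul (R := ZMod (p ^ 2)) m
  have central : ((2 * m + 1)! : ZMod (p ^ 2)) = (2 * m + 1) * (m.centralBinom * m ! ^ 2) := by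
    rw [factorial_succ, Nat.cast_mul, factorial_two_mul_eq_centralBinom_mul]
    push_cast
    ring
  have unit : IsUnit (((2 * m + 1)! : ZMod (p ^ 2)) ^ 3 * (m ! : ZMod (p ^ 2)) ^ 4) :=
    ((isUnit_factorial_of_lt (by omega)).pow 3).mul ((isUnit_factorial_of_lt (by omega)).pow 4)
  apply unit.mul_left_cancel
  set F := ((2 * m + 1)! : ZMod (p ^ 2))
  set f := (m ! : ZMod (p ^ 2))
  set C := ((2 * m + 1).choose m : ZMod (p ^ 2))
  set T := (2 ^ (p - 1) : ZMod (p ^ 2))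
  have square : 16 * (m + 1 : ZMod (p ^ 2)) ^ 2 = 1 + 2 * (p : ZMod (p ^ 2)) := by
    linear_combination P2 - (p + 4 * m + 5 : ZMod (p ^ 2)) * hpm
  set D := 1 - 2 * (p : ZMod (p ^ 2)) * invSum (p ^ 2) m (m + 1)
  linear_combination f ^ 4 * closed +
    16 * T * (2 * m + 1) * m.centralBinom * f ^ 2 * upper_sq - 16 * T * F ^ 4 * D * central +
    16 * T * F ^ 3 * D * (F + C * (m + 1) * f ^ 2) * choose + T * F ^ 3 * f ^ 4 * C ^ 2 * D * square

theorem two_pow_sub_one_eq (hp : p = 4 * m + 3) :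
    2 ^ (p - 1) = 1 + (p : ZMod (p ^ 2)) * invSum (p ^ 2) m (m + 1) := by
  have P2 := natCast_pow_zmod_self p 2
  have inv_two := natCast_mul_inv_of_lt (p := p) (r := 2) two_ne_zero (by omega)
  have fermat := two_pow_sub_one_mul_ratioProd_sq (p := p) (r := 2) (q := m) (l := m + 1)
    (n := 2 * m + 1) (by omega) (by ring) (Or.inr rfl)
  rw [ratioProd_of_sq_eq_zero (by rw [mul_pow, P2, zero_mul])] at fermat
  push_cast at inv_two
  set δ := invSum (p ^ 2) m (m + 1)
  set h := (2 : ZMod (p ^ 2))⁻¹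
  set T := (2 ^ (p - 1) : ZMod (p ^ 2))
  have linear : T * (1 - (p : ZMod (p ^ 2)) * δ) = 1 := by
    linear_combination fermat + T * (p : ZMod (p ^ 2)) * δ * inv_two - T * h ^ 2 * δ ^ 2 * P2
  linear_combination (1 + (p : ZMod (p ^ 2)) * δ) * linear + T * δ ^ 2 * P2

theorem centralBinomSum_two_of_eq_four_mul_add_three (hp : p = 4 * m + 3) :
    18 * centralBinomSum p 2 2 + 14 * centralBinomSum p 2 1 =
      (2 * (p : ZMod (p ^ 2)) + 2 - 2 ^ (p - 1)) * ((2 * m + 1).choose m : ZMod (p ^ 2)) ^ 2 := by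
  rw [centralBinomSum_two_eq_two_pow_mul hp, two_pow_sub_one_eq hp]
  set δ := invSum (p ^ 2) m (m + 1)
  set C := ((2 * m + 1).choose m : ZMod (p ^ 2))
  linear_combination -(2 * δ + 2 * δ ^ 2 + 4 * (p : ZMod (p ^ 2)) * δ ^ 2) * C ^ 2 *
    natCast_pow_zmod_self p 2

end Supercongruences

section OneModFour

open Finset Nat Polynomial

variable {p m : ℕ}

theorem four_mul_add_one_eq_zero (hp : p = 4 * m + 1) : (4 * m + 1 : ZMod p) = 0 := by
  have h : ((4 * m + 1 : ℕ) : ZMod p) = 0 := (ZMod.natCast_eq_zero_iff _ _).mpr (hp ▸ dvd_rfl)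
  exact_mod_cast h

variable [Fact p.Prime]

theorem linearSum_natCast_sq (hp : p = 4 * m + 1) :
    linearSum (2 * m) ((p : ZMod (p ^ 3)) ^ 2) = linearSum (2 * m) 0 := by
  have P3 := natCast_pow_zmod_self p 3
  have expand := eval_eq_add_of_sq_eq_zero
    (show ((p : ZMod (p ^ 3)) ^ 2) ^ 2 = 0 by linear_combination (p : ZMod (p ^ 3)) * P3)
    (linearSum (2 * m) X)
  have coeff_red : reduction p 3 ((linearSum (2 * m) (X : (ZMod (p ^ 3))[X])).coeff 1) =
      reduction p 3 0 := by
    rw [map_coeff_linearSum, linearSum_X_eq_zero (by omega), coeff_zero, map_zero]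
  have vanish := natCast_pow_mul_eq_of_reduction_eq coeff_red
  rw [eval_linearSum, eval_linearSum] at expand
  linear_combination expand + vanish

theorem three_mul_centralBinomSum_one_add (hp : p = 4 * m + 1) :
    3 * centralBinomSum p 3 1 + centralBinomSum p 3 0 = p := by
  rw [centralBinomSum_linear_relation le_rfl (show p = 2 * (2 * m) + 1 by omega)
    (linearSum_natCast_sq hp), pow_mul, neg_one_sq, one_pow, one_mul]

theorem factorial_half_sq (hp : p = 4 * m + 1) : (((2 * m)! : ZMod p)) ^ 2 = -1 := by
  have hpm : (2 * (2 * m : ℕ) + 1 : ZMod p) = 0 := two_mul_add_one_eq_zero (by omega)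
  have wilson := ZMod.wilsons_lemma p
  rw [show p - 1 = 2 * m + 2 * m by omega, factorial_add_eq_mul_prod (zero_add (2 * m)), hpm,
    pow_mul, neg_one_sq, one_pow, one_mul] at wilson
  have lower := factorial_mul_prod_add_one_add (R := ZMod p) 0 (2 * m)
  simp only [factorial_zero, zero_add, sub_zero, Nat.cast_zero, Nat.cast_one, one_mul]
    at lower wilson
  rw [lower] at wilson
  linear_combination wilson

theorem quadraticSum_zmod_eq_zero (hp : p = 4 * m + 1) :
    quadraticSum (2 * m) (0 : ZMod p) = 0 := by
  have closed := quadraticSum_two_mul_odd_sq (R := ZMod p) m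
  rwa [four_mul_add_one_eq_zero hp, zero_pow two_ne_zero] at closed

theorem constSum_zmod_ne_zero (hp : p = 4 * m + 1) : constSum (2 * m) (0 : ZMod p) ≠ 0 := by
  have hp1 := (Fact.out : p.Prime).one_lt
  have factorial_ne_zero {k : ℕ} (hk : k < p) : (k ! : ZMod p) ≠ 0 := by
    rw [Ne, ZMod.natCast_eq_zero_iff, (Fact.out : p.Prime).dvd_factorial]
    omega
  have central : (m.centralBinom : ZMod p) ≠ 0 := by
    have h := factorial_ne_zero (show 2 * m < p by omega)
    rw [factorial_two_mul_eq_centralBinom_mul] at h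
    exact left_ne_zero_of_mul h
  have closed := constSum_two_mul_odd_sq (R := ZMod p) m
  rw [four_mul_add_one_eq_zero hp, zero_pow two_ne_zero, show (16 : ZMod p) = 2 ^ 4 by norm_num]
    at closed
  rw [closed]
  exact mul_ne_zero (mul_ne_zero (pow_ne_zero _ (pow_ne_zero _ (two_ne_zero_of_eq
    (show p = 2 * (2 * m) + 1 by omega)))) central) (pow_ne_zero _ (factorial_ne_zero (by omega)))

theorem isUnit_centralBinomSum_zero (hp : p = 4 * m + 1) : IsUnit (centralBinomSum p 3 0) := by
  have nonzero := constSum_zmod_ne_zero hp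
  rw [← map_zero (reduction p 3), ← map_constSum, constSum_zero le_rfl (by omega), map_mul,
    map_zero] at nonzero
  exact isUnit_of_reduction_ne_zero (right_ne_zero_of_mul nonzero)

theorem quadratic_combination_mul_centralBinomSum_zero (hp : p = 4 * m + 1) :
    (18 * centralBinomSum p 3 2 + 14 * centralBinomSum p 3 1 + 3 * centralBinomSum p 3 0) *
      centralBinomSum p 3 0 = 3 * (p : ZMod (p ^ 3)) ^ 2 := by
  have hn : p = 2 * (2 * m) + 1 := by omega
  have hpm : (p : ZMod (p ^ 3)) = 4 * m + 1 := by exact_mod_cast congrArg Nat.cast hp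
  have P3 := natCast_pow_zmod_self p 3
  have expand := eval_eq_add_of_sq_eq_zero
    (show ((p : ZMod (p ^ 3)) ^ 2) ^ 2 = 0 by linear_combination (p : ZMod (p ^ 3)) * P3)
    (quadraticSum (2 * m) X)
  rw [eval_quadraticSum, eval_quadraticSum, hpm, quadraticSum_two_mul_odd_sq, ← hpm,
    quadraticSum_zero le_rfl hn] at expand
  have coeff_red : reduction p 3
      (constSum (2 * m) 0 * (quadraticSum (2 * m) (X : (ZMod (p ^ 3))[X])).coeff 1) =
      reduction p 3 (-3 * (2 * m)! ^ 6) := by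
    rw [map_mul, map_coeff_quadraticSum, map_constSum, map_zero, constSum_mul_coeff_quadraticSum hn
      (by omega) (quadraticSum_zmod_eq_zero hp), map_mul, map_neg, map_pow, map_natCast, map_ofNat]
    linear_combination
      3 * ((2 * m)! : ZMod p) ^ 2 * (((2 * m)! : ZMod p) ^ 2 - 1) * factorial_half_sq hp
  have lifted := natCast_pow_mul_eq_of_reduction_eq coeff_red
  rw [constSum_zero le_rfl hn] at lifted
  apply ((isUnit_factorial_of_lt (p := p) (r := 3) (show 2 * m < p by omega)).pow 6).mul_left_cancel
  linear_combination
    -((2 * m)! : ZMod (p ^ 3)) ^ 3 * centralBinomSum p 3 0 * expand - lifted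

theorem eight_mul_constSum_natCast_sq (hp : p = 4 * m + 1) :
    8 * constSum (2 * m) ((p : ZMod (p ^ 3)) ^ 2) =
      constSum (2 * m) 0 * (8 + 5 * (p : ZMod (p ^ 3)) ^ 2 * invSqSum (p ^ 3) m) := by
  have P3 := natCast_pow_zmod_self p 3
  have expand := eval_eq_add_of_sq_eq_zero
    (show ((p : ZMod (p ^ 3)) ^ 2) ^ 2 = 0 by linear_combination (p : ZMod (p ^ 3)) * P3)
    (constSum (2 * m) X)
  rw [eval_constSum, eval_constSum] at expand
  have coeff_red : reduction p 3 (8 * (constSum (2 * m) (X : (ZMod (p ^ 3))[X])).coeff 1) =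
      reduction p 3 (5 * constSum (2 * m) 0 * invSqSum (p ^ 3) m) := by
    rw [map_mul, map_mul, map_mul, map_coeff_constSum, map_constSum, map_zero,
      reduction_invSqSum (by omega), map_ofNat, map_ofNat, eight_mul_coeff_one_constSum hp]
  linear_combination 8 * expand + natCast_pow_mul_eq_of_reduction_eq coeff_red

theorem eight_mul_centralBinom_sq_mul_ratioProd_sq (hp : p = 4 * m + 1) :
    8 * (m.centralBinom : ZMod (p ^ 3)) ^ 2 * ratioProd (p ^ 3) m m (-(p : ZMod (p ^ 3))) ^ 2 =
      centralBinomSum p 3 0 * (8 + 5 * (p : ZMod (p ^ 3)) ^ 2 * invSqSum (p ^ 3) m) *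
        ratioProd (p ^ 3) m m ((p : ZMod (p ^ 3)) * -(2 : ZMod (p ^ 3))⁻¹) ^ 2 := by
  have hn : p = 2 * (2 * m) + 1 := by omega
  have hpm : (p : ZMod (p ^ 3)) = 4 * m + 1 := by exact_mod_cast congrArg Nat.cast hp
  have closed : constSum (2 * m) ((p : ZMod (p ^ 3)) ^ 2) =
      2 ^ (p - 1) * m.centralBinom * (3 * m)! ^ 2 := by
    rw [hpm, constSum_two_mul_odd_sq, show p - 1 = 4 * m by omega, pow_mul]
    norm_num
  have perturbed := eight_mul_constSum_natCast_sq hp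
  rw [closed, constSum_zero le_rfl hn] at perturbed
  have fermat := two_pow_sub_one_mul_ratioProd_sq (r := 3) hn (two_mul m).symm (Or.inl rfl)
  have central := factorial_two_mul_eq_centralBinom_mul (R := ZMod (p ^ 3)) m
  have upper := congrArg (· ^ 2) (factorial_mul_factorial_add (r := 3) hn (two_mul m).symm)
  simp only [mul_pow, ← pow_mul, mul_comm m 2, pow_mul (-1 : ZMod (p ^ 3)) 2 m, neg_one_sq,
    one_pow, one_mul, show 2 * m + m = 3 * m by ring] at upper
  apply ((isUnit_factorial_of_lt (p := p) (r := 3) (show 2 * m < p by omega)).pow 4).mul_left_cancel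
  set F := ((2 * m)! : ZMod (p ^ 3))
  set G := ((3 * m)! : ZMod (p ^ 3))
  set c := (m.centralBinom : ZMod (p ^ 3))
  set u := ratioProd (p ^ 3) m m ((p : ZMod (p ^ 3)) * -(2 : ZMod (p ^ 3))⁻¹)
  linear_combination F * u ^ 2 * perturbed - 8 * c * F * G ^ 2 * fermat - 8 * c * G ^ 2 * central -
    8 * c ^ 2 * upper

theorem eight_mul_ratioProd_neg_half (hp : p = 4 * m + 1) :
    8 * ratioProd (p ^ 3) m m ((p : ZMod (p ^ 3)) * -(2 : ZMod (p ^ 3))⁻¹) =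
      8 - 4 * (p : ZMod (p ^ 3)) * invSum (p ^ 3) m m +
        (p : ZMod (p ^ 3)) ^ 2 * (invSum (p ^ 3) m m ^ 2 + invSqSum (p ^ 3) m) := by
  have hp1 := (Fact.out : p.Prime).one_lt
  have inv_two := natCast_mul_inv_of_lt (p := p) (r := 3) two_ne_zero (by omega)
  push_cast at inv_two
  linear_combination 4 * two_mul_ratioProd_natCast_mul hp (-(2 : ZMod (p ^ 3))⁻¹) -
    4 * (p : ZMod (p ^ 3)) * invSum (p ^ 3) m m * inv_two +
    (p : ZMod (p ^ 3)) ^ 2 * (invSum (p ^ 3) m m ^ 2 + invSqSum (p ^ 3) m) *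
      (2 * (2 : ZMod (p ^ 3))⁻¹ + 1) * inv_two

theorem eight_mul_centralBinomSum_zero (hp : p = 4 * m + 1) :
    8 * centralBinomSum p 3 0 = (m.centralBinom : ZMod (p ^ 3)) ^ 2 *
      (8 - 8 * (p : ZMod (p ^ 3)) * invSum (p ^ 3) m m +
        4 * (p : ZMod (p ^ 3)) ^ 2 * invSum (p ^ 3) m m ^ 2 +
        (p : ZMod (p ^ 3)) ^ 2 * invSqSum (p ^ 3) m) := by
  have P3 := natCast_pow_zmod_self p 3
  have balance := eight_mul_centralBinom_sq_mul_ratioProd_sq hp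
  have full := two_mul_ratioProd_natCast_mul hp (-1)
  have half := eight_mul_ratioProd_neg_half hp
  rw [mul_neg_one] at full
  set P := (p : ZMod (p ^ 3))
  set c := (m.centralBinom : ZMod (p ^ 3))
  set S := centralBinomSum p 3 0
  set δ := invSum (p ^ 3) m m
  set H := invSqSum (p ^ 3) m
  set w := ratioProd (p ^ 3) m m (-P)
  set u := ratioProd (p ^ 3) m m (P * -(2 : ZMod (p ^ 3))⁻¹)
  have expanded : S * (8 - 8 * P * δ + P ^ 2 * (4 * δ ^ 2 + 7 * H)) =
      c ^ 2 * (8 - 16 * P * δ + P ^ 2 * (16 * δ ^ 2 + 8 * H)) := by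
    apply ((isUnit_two (p := p) (by omega)).pow 6).mul_left_cancel
    linear_combination -64 * balance +
      128 * c ^ 2 * (2 * w + (2 - 2 * P * δ + P ^ 2 * (δ ^ 2 + H))) * full -
      S * (8 + 5 * P ^ 2 * H) * (8 * u + (8 - 4 * P * δ + P ^ 2 * (δ ^ 2 + H))) * half +
      (128 * c ^ 2 * (P * (δ ^ 2 + H) ^ 2 - 4 * δ * (δ ^ 2 + H)) -
        S * (8 * P * (δ ^ 2 + H) ^ 2 - 64 * δ * (δ ^ 2 + H) + 5 * H * (16 * P * (2 * δ ^ 2 + H) -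
          64 * δ - 8 * P ^ 2 * δ * (δ ^ 2 + H) + P ^ 3 * (δ ^ 2 + H) ^ 2))) * P3
  apply ((isUnit_two (p := p) (by omega)).pow 3).mul_left_cancel
  linear_combination (8 + 8 * P * δ + P ^ 2 * (4 * δ ^ 2 - 7 * H)) * expanded +
    (c ^ 2 * (64 * δ ^ 3 + 176 * δ * H + P * (4 * δ ^ 2 - 7 * H) * (16 * δ ^ 2 + 8 * H)) -
      S * (112 * δ * H + P * (16 * δ ^ 4 - 49 * H ^ 2))) * P3

end OneModFour

section BinomialCongruences

open Finset Nat

theorem centralBinom_five_mul {N p m : ℕ} (hp : p = 4 * m + 1) :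
    4 * ((5 * (p : ZMod N) - 3) * (5 * (p : ZMod N) - 1)) *
        ((5 * m).centralBinom : ZMod N) =
      (5 * (p : ZMod N) - 1) ^ 2 * ((p + m).centralBinom : ZMod N) := by
  have succ_eq := congrArg (Nat.cast : ℕ → ZMod N)
    (succ_mul_centralBinom_succ (5 * m))
  rw [show 5 * m + 1 = p + m by omega] at succ_eq
  have cast_p := congrArg (Nat.cast : ℕ → ZMod N) hp
  push_cast at succ_eq cast_p
  rw [cast_p] at succ_eq ⊢
  linear_combination (-16 * (5 * (m : ZMod N) + 1)) * succ_eq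

variable {p r : ℕ} [Fact p.Prime]

theorem ratioProd_add (N q k l : ℕ) (x : ZMod N) :
    ratioProd N q (k + l) x = ratioProd N q k x * ratioProd N (q + k) l x := by
  simp only [ratioProd, prod_range_add, Nat.cast_add]
  exact congrArg _ (prod_congr rfl fun i _ ↦ by congr 3; ring)

theorem choose_mul_add_add {q l : ℕ} (h : q + l < p) (c : ℕ) :
    ((c * p + q + l).choose l : ZMod (p ^ r)) =
      (q + l).choose l * ratioProd (p ^ r) q l ((p : ZMod (p ^ r)) * c) := by
  have choose_mul_factorial (a : ℕ) :
      (l ! : ZMod (p ^ r)) * (a + l).choose l = ∏ i ∈ range l, (a + 1 + i : ZMod (p ^ r)) := by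
    rw [← Nat.cast_mul, ← ascFactorial_eq_factorial_mul_choose, ascFactorial_eq_prod_range]
    push_cast
    rfl
  apply (isUnit_factorial_of_lt (p := p) (r := r) (show l < p by omega)).mul_left_cancel
  rw [choose_mul_factorial, ← mul_assoc, choose_mul_factorial, prod_mul_ratioProd h]
  refine prod_congr rfl fun i _ ↦ ?_
  push_cast
  ring

theorem two_mul_ratioProd_zero {N : ℕ} {x : ZMod N} (hx : x ^ 3 = 0) (l : ℕ) :
    2 * ratioProd N 0 l x =
      2 + 2 * x * invSum N 0 l + x ^ 2 * (invSum N 0 l ^ 2 - invSqSum N l) := by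
  have expansion := two_mul_prod_one_add_mul hx (range l) fun i ↦ ((0 : ℕ) + 1 + i : ZMod N)⁻¹
  simpa only [ratioProd, invSum, invSqSum, Nat.cast_zero, zero_add, add_comm (1 : ZMod N)]
    using expansion

theorem ratioProd_pred_neg_self (hp2 : p ≠ 2) : ratioProd (p ^ r) 0 (p - 1) (-p) = 1 := by
  have hp1 := (Fact.out : p.Prime).one_lt
  have prod_unit : IsUnit (∏ i ∈ range (p - 1), ((0 : ℕ) + 1 + i : ZMod (p ^ r))) := by
    have h := factorial_mul_prod_add_one_add (R := ZMod (p ^ r)) 0 (p - 1)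
    exact isUnit_of_mul_isUnit_right (h ▸ isUnit_factorial_of_lt (by omega))
  apply prod_unit.mul_left_cancel
  rw [prod_mul_ratioProd (by omega), mul_one]
  simp only [← sub_eq_add_neg]
  have even_pred : Even (p - 1) := (Fact.out : p.Prime).even_sub_one hp2
  rw [prod_add_one_add_sub, even_pred.neg_one_pow, one_mul]
  refine prod_congr rfl fun i _ ↦ ?_
  rw [Nat.cast_pred (by omega)]
  ring

theorem ratioProd_pred_self (hp : 3 < p) : ratioProd (p ^ 3) 0 (p - 1) p = 1 := by
  have P3 := natCast_pow_zmod_self p 3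
  have sum_sq : (p : ZMod (p ^ 3)) ^ 2 * invSqSum (p ^ 3) (p - 1) = 0 := by
    have red : reduction p 3 (invSqSum (p ^ 3) (p - 1)) = reduction p 3 0 := by
      rw [reduction_invSqSum (by omega), map_zero,
        invSqSum_eq_neg_of_add_add_one_eq hp (show 0 + (p - 1) + 1 = p by omega), invSqSum,
        range_zero, sum_empty, neg_zero]
    simpa using natCast_pow_mul_eq_of_reduction_eq red
  have plus := two_mul_ratioProd_zero P3 (p - 1)
  have minus := two_mul_ratioProd_zero (show (-p : ZMod (p ^ 3)) ^ 3 = 0 by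
    linear_combination -P3) (p - 1)
  rw [ratioProd_pred_neg_self (by omega)] at minus
  apply (isUnit_two (p := p) (by omega)).mul_left_cancel
  set h := invSum (p ^ 3) 0 (p - 1)
  linear_combination plus + (1 + h * p) * minus +
    (h ^ 3 - h * invSqSum (p ^ 3) (p - 1)) * P3 - 2 * sum_sq

theorem choose_two_mul_self_eq_two (hp : 3 < p) : ((2 * p).choose p : ZMod (p ^ 3)) = 2 := by
  have shifted := choose_mul_add_add (r := 3) (q := 0) (show 0 + (p - 1) < p by omega) 1
  rw [Nat.cast_one, mul_one, ratioProd_pred_self hp, zero_add, choose_self, Nat.cast_one,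
    mul_one] at shifted
  have pascal : (2 * p).choose p = 2 * (1 * p + 0 + (p - 1)).choose (p - 1) := by
    have h := Nat.add_one_mul_choose_eq (1 * p + 0 + (p - 1)) (p - 1)
    rw [show 1 * p + 0 + (p - 1) + 1 = 2 * p by omega, show p - 1 + 1 = p by omega] at h
    exact Nat.eq_of_mul_eq_mul_right (show 0 < p by omega) (by linarith)
  rw [pascal, Nat.cast_mul, shifted]
  norm_num

theorem centralBinom_add_mul_choose_sq (a b : ℕ) :
    (a + b).centralBinom * (a + b).choose b ^ 2 =
      (2 * a + 2 * b).choose (2 * b) * a.centralBinom * b.centralBinom := by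
  have factorial_two_mul (n : ℕ) : (2 * n)! = n.centralBinom * n ! ^ 2 :=
    factorial_two_mul_eq_centralBinom_mul (R := ℕ) n
  apply Nat.eq_of_mul_eq_mul_right (show 0 < (a ! * b !) ^ 2 by positivity)
  calc (a + b).centralBinom * (a + b).choose b ^ 2 * (a ! * b !) ^ 2
      = (a + b).centralBinom * ((a + b).choose b * a ! * b !) ^ 2 := by ring
    _ = (2 * a + 2 * b).choose (2 * b) * (2 * a)! * (2 * b)! := by
      rw [add_choose_mul_factorial_mul_factorial, add_choose_mul_factorial_mul_factorial,
        ← mul_add, factorial_two_mul]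
    _ = _ := by
      rw [factorial_two_mul, factorial_two_mul]
      ring

variable {m : ℕ}

theorem choose_six_mul (hp : p = 4 * m + 1) :
    2 * (3 * (p : ZMod (p ^ 3)) - 1) * ((6 * m).choose m : ZMod (p ^ 3)) =
      (5 * (p : ZMod (p ^ 3)) - 1) * (m.centralBinom : ZMod (p ^ 3)) *
        ratioProd (p ^ 3) m m p := by
  have succ_eq := congrArg (Nat.cast : ℕ → ZMod (p ^ 3)) (Nat.choose_mul_succ_eq (6 * m) m)
  have expansion := choose_mul_add_add (r := 3) (show m + m < p by omega) 1
  rw [Nat.cast_one, mul_one, ← two_mul, show 1 * p + m + m = 6 * m + 1 by omega] at expansion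
  rw [Nat.cast_mul, Nat.cast_mul, expansion, show 6 * m + 1 - m = 5 * m + 1 by omega,
    ← centralBinom_eq_two_mul_choose] at succ_eq
  have cast_p := congrArg (Nat.cast : ℕ → ZMod (p ^ 3)) hp
  push_cast at succ_eq cast_p
  linear_combination 4 * succ_eq + (6 * ((6 * m).choose m : ZMod (p ^ 3)) -
    5 * m.centralBinom * ratioProd (p ^ 3) m m p) * cast_p

theorem choose_ten_mul (hp : p = 4 * m + 1) :
    4 * ((5 * (p : ZMod (p ^ 3)) - 3) * (5 * (p : ZMod (p ^ 3)) - 1)) *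
        ((10 * m).choose m : ZMod (p ^ 3)) =
      (9 * (p : ZMod (p ^ 3)) - 5) * (9 * (p : ZMod (p ^ 3)) - 1) *
        (m.centralBinom : ZMod (p ^ 3)) * ratioProd (p ^ 3) m m ((p : ZMod (p ^ 3)) * 2) := by
  have succ_eq := congrArg (Nat.cast : ℕ → ZMod (p ^ 3)) (Nat.choose_mul_succ_eq (10 * m) m)
  have succ_succ_eq := congrArg (Nat.cast : ℕ → ZMod (p ^ 3))
    (Nat.choose_mul_succ_eq (10 * m + 1) m)
  have expansion := choose_mul_add_add (r := 3) (show m + m < p by omega) 2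
  rw [← two_mul, show 2 * p + m + m = 10 * m + 1 + 1 by omega] at expansion
  rw [Nat.cast_mul, Nat.cast_mul, expansion, show 10 * m + 1 + 1 - m = 9 * m + 2 by omega,
    ← centralBinom_eq_two_mul_choose] at succ_succ_eq
  rw [Nat.cast_mul, Nat.cast_mul, show 10 * m + 1 - m = 9 * m + 1 by omega] at succ_eq
  have cast_p := congrArg (Nat.cast : ℕ → ZMod (p ^ 3)) hp
  push_cast at succ_eq succ_succ_eq cast_p
  set R := ratioProd (p ^ 3) m m ((p : ZMod (p ^ 3)) * 2)
  rw [cast_p]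
  linear_combination 16 * (10 * (m : ZMod (p ^ 3)) + 2) * succ_eq +
    16 * (9 * (m : ZMod (p ^ 3)) + 1) * succ_succ_eq

theorem ratioProd_two_mul (hp : p = 4 * m + 1) :
    ratioProd (p ^ 3) 0 m ((p : ZMod (p ^ 3)) * 2) =
      ratioProd (p ^ 3) 0 m p ^ 2 *
        (1 - (p : ZMod (p ^ 3)) ^ 2 * invSqSum (p ^ 3) m) := by
  have P3 := natCast_pow_zmod_self p 3
  have h1 := two_mul_ratioProd_zero P3 m
  have h2 := two_mul_ratioProd_zero
    (show ((p : ZMod (p ^ 3)) * 2) ^ 3 = 0 by rw [mul_pow, P3, zero_mul]) m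
  have two := isUnit_two (p := p) (r := 3) (by omega)
  apply (two.mul two).mul_left_cancel
  set P := (p : ZMod (p ^ 3))
  set h := invSum (p ^ 3) 0 m
  set H := invSqSum (p ^ 3) m
  set R := ratioProd (p ^ 3) 0 m P
  linear_combination 2 * h2 -
    (1 - P ^ 2 * H) * (2 * R + 2 + 2 * P * h + P ^ 2 * (h ^ 2 - H)) * h1 +
    (12 * h * H - 4 * h ^ 3 + P * (10 * h ^ 2 * H - h ^ 4 - 5 * H ^ 2) +
      P ^ 2 * (4 * h ^ 3 * H - 4 * h * H ^ 2) +
      P ^ 3 * (h ^ 4 * H + H ^ 3 - 2 * h ^ 2 * H ^ 2)) * P3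

theorem centralBinom_add_self (hp : p = 4 * m + 1) :
    ((p + m).centralBinom : ZMod (p ^ 3)) =
      2 * (m.centralBinom : ZMod (p ^ 3)) *
        (1 - (p : ZMod (p ^ 3)) ^ 2 * invSqSum (p ^ 3) m) *
        ratioProd (p ^ 3) m m ((p : ZMod (p ^ 3)) * 2) := by
  have hp1 := (Fact.out : p.Prime).one_lt
  have identity := congrArg (Nat.cast : ℕ → ZMod (p ^ 3)) (centralBinom_add_mul_choose_sq p m)
  have h1 := choose_mul_add_add (r := 3) (show 0 + m < p by omega) 1
  have h2 := choose_mul_add_add (r := 3) (show 0 + 2 * m < p by omega) 2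
  simp only [one_mul, add_zero, zero_add, choose_self, Nat.cast_one, mul_one] at h1
  simp only [add_zero, zero_add, choose_self, Nat.cast_one, one_mul, Nat.cast_ofNat, two_mul m,
    ratioProd_add, ratioProd_two_mul hp] at h2
  rw [← two_mul] at h2
  rw [Nat.cast_mul, Nat.cast_mul, Nat.cast_mul, h2, Nat.cast_pow, h1,
    centralBinom_eq_two_mul_choose p, choose_two_mul_self_eq_two (by omega)] at identity
  have unit : IsUnit (ratioProd (p ^ 3) 0 m (p : ZMod (p ^ 3))) := by
    apply isUnit_of_reduction_ne_zero
    have h := congrArg (reduction p 3) (two_mul_ratioProd_zero (natCast_pow_zmod_self p 3) m)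
    intro zero
    simp only [map_mul, map_add, map_pow, map_natCast, CharP.cast_eq_zero, zero, mul_zero,
      zero_mul, add_zero, map_ofNat, zero_pow two_ne_zero] at h
    exact two_ne_zero_of_eq (show p = 2 * (2 * m) + 1 by omega) h.symm
  apply (unit.pow 2).mul_left_cancel
  linear_combination identity

theorem two_mul_pred_mul_binomial_combination (hp : p = 4 * m + 1) :
    2 * ((p : ZMod (p ^ 3)) - 1) * (15 * (m.centralBinom : ZMod (p ^ 3)) -
        20 * ((6 * m).choose m : ZMod (p ^ 3)) + 6 * ((10 * m).choose m : ZMod (p ^ 3)) +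
        3 * ((5 * m).centralBinom : ZMod (p ^ 3))) =
      -(m.centralBinom : ZMod (p ^ 3)) * (16 - 8 * (p : ZMod (p ^ 3)) * invSum (p ^ 3) m m +
        2 * (p : ZMod (p ^ 3)) ^ 2 * invSum (p ^ 3) m m ^ 2 +
        (p : ZMod (p ^ 3)) ^ 2 * invSqSum (p ^ 3) m) := by
  have hp1 := (Fact.out : p.Prime).one_lt
  have P3 := natCast_pow_zmod_self p 3
  have two := isUnit_two (p := p) (r := 3) (by omega)
  have unit : IsUnit (4 * (3 * (p : ZMod (p ^ 3)) - 1) *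
      ((5 * (p : ZMod (p ^ 3)) - 3) * (5 * (p : ZMod (p ^ 3)) - 1))) := by
    apply isUnit_of_reduction_ne_zero
    simp only [map_mul, map_sub, map_ofNat, map_natCast, map_one, CharP.cast_eq_zero, mul_zero]
    have two_ne_zero := two_ne_zero_of_eq (show p = 2 * (2 * m) + 1 by omega)
    have three_ne_zero := natCast_zmod_ne_zero_of_lt three_ne_zero (show 3 < p by omega)
    rw [show (4 * (0 - 1) * ((0 - 3) * (0 - 1)) : ZMod p) = -(2 ^ 2 * (3 : ℕ)) by
      norm_num]
    exact neg_ne_zero.mpr (mul_ne_zero (pow_ne_zero 2 two_ne_zero) three_ne_zero)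
  have h1 := choose_six_mul hp
  have h2 := choose_ten_mul hp
  have h3 := centralBinom_five_mul (N := p ^ 3) hp
  rw [centralBinom_add_self hp] at h3
  have e1 := two_mul_ratioProd_natCast_mul hp 1
  have e2 := two_mul_ratioProd_natCast_mul hp 2
  rw [mul_one] at e1
  apply unit.mul_left_cancel
  set P := (p : ZMod (p ^ 3))
  set D := invSum (p ^ 3) m m
  set E := invSqSum (p ^ 3) m
  set C := (m.centralBinom : ZMod (p ^ 3))
  set Q1 := ratioProd (p ^ 3) m m P
  set Q2 := ratioProd (p ^ 3) m m (P * 2)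
  have hQ2 : Q2 = 1 + 2 * P * D + 2 * P ^ 2 * (D ^ 2 + E) := by
    apply two.mul_left_cancel
    linear_combination e2
  rw [hQ2] at h2 h3
  linear_combination 2 * (P - 1) * (-20 * ((5 * P - 3) * (5 * P - 1)) *
      (2 * h1 + (5 * P - 1) * C * e1) + 6 * (3 * P - 1) * h2 + 3 * (3 * P - 1) * h3) +
    C * (2816 * P - 1792 + D * (-2368 * P ^ 2 + 2816 * P - 960) +
      D ^ 2 * (2632 * P ^ 3 - 4184 * P ^ 2 + 2040 * P - 360) +
      E * (1732 * P ^ 3 - 2924 * P ^ 2 + 1564 * P - 308) -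
      24 * (P - 1) * (3 * P - 1) * (5 * P - 1) ^ 2 * E * (D + P * (D ^ 2 + E))) * P3

end BinomialCongruences

section TeichmullerLift

open Finset

variable {p r : ℕ} [NeZero r]

theorem pow_eq_pow_of_reduction_eq {a b : ZMod (p ^ r)} (h : reduction p r a = reduction p r b) :
    a ^ p ^ (r - 1) = b ^ p ^ (r - 1) := by
  have dvd := dvd_sub_pow_of_dvd_sub (natCast_dvd_sub_of_reduction_eq h) (r - 1)
  rw [Nat.sub_add_cancel NeZero.one_le, natCast_pow_zmod_self, zero_dvd_iff] at dvd
  exact sub_eq_zero.mp dvd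

variable [Fact p.Prime]

theorem reduction_natCast_val (a : ZMod p) : reduction p r (a.val : ZMod (p ^ r)) = a := by
  rw [map_natCast, ZMod.natCast_zmod_val]

variable (p r) in
/-- The Teichmüller lift, the multiplicative section of reduction modulo `p`: the `p ^ (r - 1)`-th
power of an arbitrary lift does not depend on that lift, so the representative `a.val` serves. -/
def teichmullerLift : ZMod p →*₀ ZMod (p ^ r) where
  toFun a := (a.val : ZMod (p ^ r)) ^ p ^ (r - 1)
  map_zero' := by
    rw [ZMod.val_zero, Nat.cast_zero, zero_pow (pow_ne_zero _ (Fact.out : p.Prime).ne_zero)]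
  map_one' := by
    rw [ZMod.val_one, Nat.cast_one, one_pow]
  map_mul' a b := by
    rw [← mul_pow]
    apply pow_eq_pow_of_reduction_eq
    simp only [map_mul, reduction_natCast_val]

theorem teichmullerLift_reduction (x : ZMod (p ^ r)) :
    teichmullerLift p r (reduction p r x) = x ^ p ^ (r - 1) :=
  pow_eq_pow_of_reduction_eq (reduction_natCast_val _)

theorem reduction_teichmullerLift (a : ZMod p) : reduction p r (teichmullerLift p r a) = a := by
  rw [teichmullerLift, MonoidWithZeroHom.coe_mk, ZeroHom.coe_mk, map_pow, reduction_natCast_val,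
    ZMod.pow_card_pow]

theorem teichmullerLift_neg_one (hp2 : p ≠ 2) : teichmullerLift p r (-1) = -1 := by
  have h := teichmullerLift_reduction (p := p) (r := r) (-1)
  rwa [map_neg, map_one, ((Fact.out : p.Prime).odd_of_ne_two hp2).pow.neg_one_pow] at h

theorem teichmullerLift_pow_pred {a : ZMod p} (ha : a ≠ 0) :
    teichmullerLift p r a ^ (p - 1) = 1 := by
  rw [← map_pow, ZMod.pow_card_sub_one_eq_one ha, map_one]

theorem sum_teichmullerLift_pow {j : ℕ} (hj : j ≠ 0) :
    ∑ t, teichmullerLift p r t ^ j = if p - 1 ∣ j then (p : ZMod (p ^ r)) - 1 else 0 := by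
  split_ifs with h
  · obtain ⟨c, rfl⟩ := h
    rw [← sum_erase_add _ _ (mem_univ (0 : ZMod p)), map_zero, zero_pow hj, add_zero,
      sum_congr rfl fun t ht ↦ by
        rw [pow_mul, teichmullerLift_pow_pred (ne_of_mem_erase ht), one_pow],
      sum_const, card_erase_of_mem (mem_univ _), card_univ, ZMod.card, nsmul_one,
      Nat.cast_pred (Fact.out : p.Prime).pos]
  · obtain ⟨g, hg⟩ : ∃ g : (ZMod p)ˣ, g ^ j ≠ 1 := by
      have := (FiniteField.forall_pow_eq_one_iff (ZMod p) j).not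
      rw [ZMod.card] at this
      exact not_forall.mp (this.mpr h)
    have invariant : teichmullerLift p r g ^ j * ∑ t, teichmullerLift p r t ^ j =
        ∑ t, teichmullerLift p r t ^ j := by
      simp only [mul_sum, ← mul_pow, ← map_mul]
      exact Fintype.sum_equiv (Units.mulLeft g) _ _ fun _ ↦ rfl
    have unit : IsUnit (teichmullerLift p r g ^ j - 1) := by
      apply isUnit_of_reduction_ne_zero
      rw [map_sub, map_pow, reduction_teichmullerLift, map_one, sub_ne_zero,
        ← Units.val_pow_eq_pow_val, Ne, Units.val_eq_one]
      exact hg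
    apply unit.mul_left_cancel
    linear_combination invariant

variable {m : ℕ}

theorem filter_dvd_three_mul_add (hm : 0 < m) (s : ℕ) :
    {k ∈ range (4 * m * s + 2 * m + 1) | 4 * m ∣ 3 * m + k} =
      (range (s + 1)).image fun i ↦ 4 * m * i + m := by
  ext k
  simp only [mem_filter, mem_range, mem_image]
  constructor
  · rintro ⟨hk, c, hc⟩
    obtain ⟨i, rfl⟩ : ∃ i, c = i + 1 := Nat.exists_eq_succ_of_ne_zero (by rintro rfl; omega)
    refine ⟨i, ?_, by linarith⟩
    by_contra! hi
    nlinarith [Nat.mul_le_mul_left (4 * m) hi]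
  · rintro ⟨i, hi, rfl⟩
    refine ⟨?_, i + 1, by ring⟩
    nlinarith [Nat.mul_le_mul_left (4 * m) (Nat.le_of_lt_succ hi)]

theorem sum_teichmullerLift_pow_mul_one_sub_pow (hp : p = 4 * m + 1) (s : ℕ) :
    ∑ t, teichmullerLift p r t ^ (3 * m) * (1 - teichmullerLift p r t) ^ (4 * m * s + 2 * m) =
      ((p : ZMod (p ^ r)) - 1) * (-1) ^ m *
        ∑ i ∈ range (s + 1), ((4 * m * s + 2 * m).choose (4 * m * i + m) : ZMod (p ^ r)) := by
  have hp1 := (Fact.out : p.Prime).one_lt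
  set N := 4 * m * s + 2 * m with hN
  have expand (x : ZMod (p ^ r)) : x ^ (3 * m) * (1 - x) ^ N =
      ∑ k ∈ range (N + 1), (-1) ^ k * (N.choose k : ZMod (p ^ r)) * x ^ (3 * m + k) := by
    rw [sub_eq_neg_add, add_pow, mul_sum]
    refine sum_congr rfl fun k _ ↦ ?_
    rw [neg_pow, pow_add, one_pow]
    ring
  calc _ = ∑ k ∈ range (N + 1), (-1) ^ k * (N.choose k : ZMod (p ^ r)) *
        if 4 * m ∣ 3 * m + k then (p : ZMod (p ^ r)) - 1 else 0 := by
        simp only [expand]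
        rw [sum_comm]
        refine sum_congr rfl fun k _ ↦ ?_
        rw [← mul_sum, sum_teichmullerLift_pow (by omega), show p - 1 = 4 * m by omega]
    _ = ∑ i ∈ range (s + 1), (-1) ^ (4 * m * i + m) *
        (N.choose (4 * m * i + m) : ZMod (p ^ r)) * ((p : ZMod (p ^ r)) - 1) := by
        simp only [mul_ite, mul_zero]
        rw [← sum_filter, hN, filter_dvd_three_mul_add (by omega), sum_image]
        intro i _ j _ hij
        exact Nat.eq_of_mul_eq_mul_left (show 0 < 4 * m by omega) (Nat.add_right_cancel hij)
    _ = _ := by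
        rw [mul_sum]
        refine sum_congr rfl fun i _ ↦ ?_
        rw [pow_add, show 4 * m * i = 2 * (2 * m * i) by ring, pow_mul, neg_one_sq, one_pow]
        ring

end TeichmullerLift

section QuarticJacobiSum

open Finset

variable {p m : ℕ} [Fact p.Prime]

variable (p m) in
/-- The Jacobi sum `J(χ, χ ^ 2)` modulo `p ^ 3` of the quartic character `χ` of `ZMod p`,
`p = 4 * m + 1`, that lifts `t ↦ t ^ (3 * m)`. -/
def quarticJacobiSum : ZMod (p ^ 3) :=
  ∑ t, teichmullerLift p 3 t ^ (3 * m) * teichmullerLift p 3 (1 - t) ^ (2 * m)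

-- The Legendre symbol `e = ±1` of `1 - t` is congruent modulo `p` to `w = y ^ (2 * m)`, and the
-- polynomial `(15 * w - 10 * w ^ 3 + 3 * w ^ 5) / 8` agrees with `±1` at `w = ±1` to third order.
theorem eight_mul_teichmullerLift_one_sub_pow (hp : p = 4 * m + 1) (t : ZMod p) :
    8 * teichmullerLift p 3 (1 - t) ^ (2 * m) =
      15 * (1 - teichmullerLift p 3 t) ^ (2 * m) - 10 * (1 - teichmullerLift p 3 t) ^ (6 * m) +
        3 * (1 - teichmullerLift p 3 t) ^ (10 * m) := by
  have hp1 := (Fact.out : p.Prime).one_lt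
  by_cases ht : 1 - t = 0
  · have ht1 : t = 1 := (sub_eq_zero.mp ht).symm
    rw [ht, ht1, map_one, map_zero, sub_self, zero_pow (by omega), zero_pow (by omega),
      zero_pow (by omega)]
    ring
  set y := 1 - teichmullerLift p 3 t with hy
  set e := teichmullerLift p 3 (1 - t) ^ (2 * m) with he
  have sign : e ^ 2 = 1 := by
    rw [he, ← pow_mul, show 2 * m * 2 = p - 1 by omega, teichmullerLift_pow_pred ht]
  have cube : (e * y ^ (2 * m) - 1) ^ 3 = 0 := by
    have red : reduction p 3 (e * y ^ (2 * m)) = reduction p 3 1 := by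
      rw [he, hy, map_mul, map_pow, map_pow, map_sub (reduction p 3),
        reduction_teichmullerLift, reduction_teichmullerLift, map_one, ← pow_add,
        show 2 * m + 2 * m = p - 1 by omega, ZMod.pow_card_sub_one_eq_one ht]
    obtain ⟨c, hc⟩ := natCast_dvd_sub_of_reduction_eq red
    rw [hc, mul_pow, natCast_pow_zmod_self, zero_mul]
  rw [show 6 * m = 2 * m * 3 by ring, show 10 * m = 2 * m * 5 by ring, pow_mul y (2 * m) 3,
    pow_mul y (2 * m) 5]
  generalize y ^ (2 * m) = w at cube ⊢
  linear_combination (-e * (3 * e ^ 2 * w ^ 2 + 9 * e * w + 8)) * cube +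
    (3 * w ^ 5 * (e ^ 4 + e ^ 2 + 1) - 10 * w ^ 3 * (e ^ 2 + 1) + 15 * w) * sign

theorem eight_mul_quarticJacobiSum (hp : p = 4 * m + 1) :
    8 * quarticJacobiSum p m = ((p : ZMod (p ^ 3)) - 1) * (-1) ^ m *
      (15 * (m.centralBinom : ZMod (p ^ 3)) - 20 * ((6 * m).choose m : ZMod (p ^ 3)) +
        6 * ((10 * m).choose m : ZMod (p ^ 3)) + 3 * ((5 * m).centralBinom : ZMod (p ^ 3))) := by
  have interpolation : 8 * quarticJacobiSum p m = ∑ t : ZMod p,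
      (15 * (teichmullerLift p 3 t ^ (3 * m) * (1 - teichmullerLift p 3 t) ^ (2 * m)) -
        10 * (teichmullerLift p 3 t ^ (3 * m) * (1 - teichmullerLift p 3 t) ^ (6 * m)) +
        3 * (teichmullerLift p 3 t ^ (3 * m) * (1 - teichmullerLift p 3 t) ^ (10 * m))) := by
    rw [quarticJacobiSum, mul_sum]
    refine sum_congr rfl fun t _ ↦ ?_
    linear_combination teichmullerLift p 3 t ^ (3 * m) * eight_mul_teichmullerLift_one_sub_pow hp t
  have s0 := sum_teichmullerLift_pow_mul_one_sub_pow (r := 3) hp 0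
  have s1 := sum_teichmullerLift_pow_mul_one_sub_pow (r := 3) hp 1
  have s2 := sum_teichmullerLift_pow_mul_one_sub_pow (r := 3) hp 2
  rw [show 4 * m * 0 + 2 * m = 2 * m by ring] at s0
  rw [show 4 * m * 1 + 2 * m = 6 * m by ring] at s1
  rw [show 4 * m * 2 + 2 * m = 10 * m by ring] at s2
  simp only [sum_range_succ, range_zero, sum_empty, zero_add, mul_zero, mul_one,
    show 4 * m + m = 5 * m by ring, show 4 * m * 2 + m = 9 * m by ring,
    Nat.choose_symm_of_eq_add (show 6 * m = 5 * m + m by ring),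
    Nat.choose_symm_of_eq_add (show 10 * m = 9 * m + m by ring)] at s0 s1 s2
  rw [interpolation, sum_add_distrib, sum_sub_distrib, ← mul_sum, ← mul_sum, ← mul_sum, s0, s1, s2,
    Nat.centralBinom_eq_two_mul_choose, Nat.centralBinom_eq_two_mul_choose,
    show 2 * (5 * m) = 10 * m by ring]
  ring

theorem sixteen_mul_quarticJacobiSum (hp : p = 4 * m + 1) :
    16 * quarticJacobiSum p m = -(-1) ^ m * (m.centralBinom : ZMod (p ^ 3)) *
      (16 - 8 * (p : ZMod (p ^ 3)) * invSum (p ^ 3) m m +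
        2 * (p : ZMod (p ^ 3)) ^ 2 * invSum (p ^ 3) m m ^ 2 +
        (p : ZMod (p ^ 3)) ^ 2 * invSqSum (p ^ 3) m) := by
  linear_combination 2 * eight_mul_quarticJacobiSum hp +
    (-1) ^ m * two_mul_pred_mul_binomial_combination hp

theorem quarticJacobiSum_sq (hp : p = 4 * m + 1) :
    quarticJacobiSum p m ^ 2 = centralBinomSum p 3 0 := by
  have h1 := sixteen_mul_quarticJacobiSum hp
  have h2 := eight_mul_centralBinomSum_zero hp
  have P3 := natCast_pow_zmod_self p 3
  have sign : ((-1 : ZMod (p ^ 3)) ^ m) ^ 2 = 1 := by rw [← pow_mul, pow_mul', neg_one_sq, one_pow]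
  apply ((isUnit_two (p := p) (by omega)).pow 8).mul_left_cancel
  set s := (-1 : ZMod (p ^ 3)) ^ m
  set D := invSum (p ^ 3) m m
  set E := invSqSum (p ^ 3) m
  set C := (m.centralBinom : ZMod (p ^ 3))
  set P := (p : ZMod (p ^ 3))
  set A := 16 - 8 * P * D + 2 * P ^ 2 * D ^ 2 + P ^ 2 * E
  linear_combination (16 * quarticJacobiSum p m - s * C * A) * h1 - 32 * h2 + C ^ 2 * A ^ 2 * sign +
    C ^ 2 * (-16 * D * (2 * D ^ 2 + E) + P * (2 * D ^ 2 + E) ^ 2) * P3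

end QuarticJacobiSum

section GaussianJacobiSums

theorem isPrimitiveRoot_sqrtd : IsPrimitiveRoot (Zsqrtd.sqrtd : GaussianInt) 4 :=
  .mk_of_lt _ (by norm_num) (by decide) fun l _ _ ↦ by interval_cases l <;> decide

section FiniteField

variable {F : Type*} [Field F] [Fintype F] {χ ψ : MulChar F GaussianInt}

theorem jacobiSum_mul_star_jacobiSum (hχ : χ ≠ 1) (hψ : ψ ≠ 1) (hχψ : χ * ψ ≠ 1) :
    jacobiSum χ ψ * star (jacobiSum χ ψ) = Fintype.card F := by
  classical
  set c := GaussianInt.toComplex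
  have ringHomComp_ne_one {ω : MulChar F GaussianInt} (hω : ω ≠ 1) : ω.ringHomComp c ≠ 1 :=
    (MulChar.ringHomComp_ne_one_iff GaussianInt.toComplex_injective).mpr hω
  have inv_eq_conj (ω : MulChar F GaussianInt) :
      (ω.ringHomComp c)⁻¹ = (ω.ringHomComp c).ringHomComp (starRingEnd ℂ) := by
    rw [← MulChar.star_eq_inv]
    rfl
  have key := jacobiSum_mul_jacobiSum_inv
    (by rw [ringChar.eq_zero]; exact (CharP.ringChar_ne_zero_of_finite F).symm)
    (ringHomComp_ne_one hχ) (ringHomComp_ne_one hψ)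
    (by rw [← MulChar.ringHomComp_mul]; exact ringHomComp_ne_one hχψ)
  rw [inv_eq_conj, inv_eq_conj, jacobiSum_ringHomComp, jacobiSum_ringHomComp, jacobiSum_ringHomComp]
    at key
  apply GaussianInt.toComplex_injective
  rw [map_mul, GaussianInt.toComplex_star, key, map_natCast]

-- `J(χ, ψ) ≡ -1` modulo `(i - 1) ^ 2 = -2 * i`.
theorem odd_re_and_even_im_jacobiSum (hχ : χ ^ 4 = 1) (hψ : ψ ^ 4 = 1)
    (hF : 4 ∣ Fintype.card F - 1) : Odd (jacobiSum χ ψ).re ∧ Even (jacobiSum χ ψ).im := by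
  obtain ⟨z, -, hz⟩ :=
    exists_jacobiSum_eq_neg_one_add (by norm_num) hχ hψ hF isPrimitiveRoot_sqrtd
  rw [hz, show ((Zsqrtd.sqrtd : GaussianInt) - 1) ^ 2 = ⟨0, -2⟩ by decide]
  constructor
  · exact ⟨z.im - 1, by simp; ring⟩
  · exact ⟨-z.re, by simp; ring⟩

theorem exists_mulChar_apply_eq_sqrtd (hF : 4 ∣ Fintype.card F - 1) {g : Fˣ}
    (hg : ∀ u, u ∈ Subgroup.zpowers g) : ∃ χ : MulChar F GaussianInt, χ g = Zsqrtd.sqrtd := by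
  classical
  have i_root := isPrimitiveRoot_sqrtd
  obtain ⟨i, hi⟩ := i_root.isUnit (by norm_num)
  rw [← hi, IsPrimitiveRoot.coe_units_iff] at i_root
  have i_mem : i ∈ rootsOfUnity (Fintype.card Fˣ) GaussianInt := by
    rw [mem_rootsOfUnity, Fintype.card_units]
    exact (i_root.pow_eq_one_iff_dvd _).mpr hF
  exact ⟨.ofRootOfUnity i_mem hg, (MulChar.ofRootOfUnity_spec i_mem hg).trans hi⟩

end FiniteField

variable {p m : ℕ} [Fact p.Prime]

theorem pow_two_mul_eq_neg_one_of_forall_mem_zpowers (hp : p = 4 * m + 1) {g : (ZMod p)ˣ}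
    (hg : ∀ u, u ∈ Subgroup.zpowers g) : (g : ZMod p) ^ (2 * m) = -1 := by
  have hp1 := (Fact.out : p.Prime).one_lt
  have order_g : orderOf g = 4 * m := by
    rw [orderOf_eq_card_of_forall_mem_zpowers hg, Nat.card_eq_fintype_card, ZMod.card_units]
    omega
  exact ((IsPrimitiveRoot.coe_units_iff.mpr (order_g ▸ IsPrimitiveRoot.orderOf g)).pow
    (by omega) (by ring : 4 * m = 2 * m * 2)).eq_neg_one_of_two_right

theorem exists_quartic_mulChar_lifting_pow {r : ℕ} [NeZero r] (hp : p = 4 * m + 1) :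
    ∃ (χ : MulChar (ZMod p) GaussianInt) (f : GaussianInt →+* ZMod (p ^ r)), orderOf χ = 4 ∧
      ∀ t, f (χ t) = teichmullerLift p r t ^ (3 * m) := by
  have hp1 := (Fact.out : p.Prime).one_lt
  obtain ⟨g, hg⟩ := IsCyclic.exists_generator (α := (ZMod p)ˣ)
  obtain ⟨χ, χ_g⟩ := exists_mulChar_apply_eq_sqrtd (by rw [ZMod.card]; omega) hg
  have j_sq : teichmullerLift p r g ^ (3 * m) * teichmullerLift p r g ^ (3 * m) =
      ((-1 : ℤ) : ZMod (p ^ r)) := by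
    rw [← pow_add, show 3 * m + 3 * m = 2 * m * 3 by ring, pow_mul, ← map_pow,
      pow_two_mul_eq_neg_one_of_forall_mem_zpowers hp hg, teichmullerLift_neg_one (by omega)]
    push_cast
    ring
  refine ⟨χ, Zsqrtd.lift ⟨_, j_sq⟩, ?_, fun t ↦ ?_⟩
  · rw [isPrimitiveRoot_sqrtd.eq_orderOf, orderOf_eq_orderOf_iff]
    intro k
    rw [MulChar.eq_iff hg, MulChar.pow_apply_coe, χ_g, MulChar.one_apply_coe]
  · obtain rfl | ht := eq_or_ne t 0
    · rw [MulChar.map_zero, map_zero, map_zero, zero_pow (by omega)]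
    · obtain ⟨k, hk⟩ := (Submonoid.mem_powers_iff _ _).mp
        (mem_powers_iff_mem_zpowers.mpr (hg (Units.mk0 t ht)))
      rw [show t = (g : ZMod p) ^ k by rw [← Units.val_pow_eq_pow_val, hk, Units.val_mk0],
        map_pow, map_pow, χ_g, map_pow, pow_right_comm]
      simp [Zsqrtd.lift]

theorem exists_sq_add_sq_eq_and_quarticJacobiSum (hp : p = 4 * m + 1) :
    ∃ a b : ℤ, Odd a ∧ Even b ∧ a ^ 2 + b ^ 2 = p ∧ ∃ β : ZMod (p ^ 3),
      quarticJacobiSum p m * β = (p : ZMod (p ^ 3)) ∧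
        quarticJacobiSum p m + β = 2 * (a : ZMod (p ^ 3)) := by
  have hp1 := (Fact.out : p.Prime).one_lt
  obtain ⟨χ, f, order_χ, hf⟩ := exists_quartic_mulChar_lifting_pow (r := 3) hp
  have χ_pow_ne_one {k : ℕ} (hk : ¬4 ∣ k) : χ ^ k ≠ 1 := by
    rwa [Ne, ← orderOf_dvd_iff_pow_eq_one, order_χ]
  have χ_pow_four : χ ^ 4 = 1 := order_χ ▸ pow_orderOf_eq_one χ
  have norm_J : jacobiSum χ (χ ^ 2) * star (jacobiSum χ (χ ^ 2)) = p := by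
    rw [jacobiSum_mul_star_jacobiSum, ZMod.card]
    · exact pow_one χ ▸ χ_pow_ne_one (by norm_num)
    · exact χ_pow_ne_one (by norm_num)
    · exact pow_succ' χ 2 ▸ χ_pow_ne_one (by norm_num)
  obtain ⟨odd_re, even_im⟩ := odd_re_and_even_im_jacobiSum χ_pow_four
    (show (χ ^ 2) ^ 4 = 1 by rw [← pow_mul, pow_mul', χ_pow_four, one_pow])
    (by rw [ZMod.card]; omega)
  have f_J : f (jacobiSum χ (χ ^ 2)) = quarticJacobiSum p m := by
    rw [jacobiSum, map_sum, quarticJacobiSum]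
    refine Finset.sum_congr rfl fun t _ ↦ ?_
    rw [map_mul, hf, MulChar.pow_apply' _ two_ne_zero, map_pow, hf, ← pow_mul]
    obtain h | h := eq_or_ne (1 - t) 0
    · rw [h, map_zero, zero_pow (by omega), zero_pow (by omega)]
    · rw [show 3 * m * 2 = p - 1 + 2 * m by omega, pow_add (teichmullerLift p 3 (1 - t)),
        teichmullerLift_pow_pred h, one_mul]
  set J := jacobiSum χ (χ ^ 2)
  refine ⟨J.re, J.im, odd_re, even_im, ?_, f (star J), ?_, ?_⟩
  · simpa [sq] using congrArg Zsqrtd.re norm_J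
  · rw [← f_J, ← map_mul, norm_J, map_natCast]
  · rw [← f_J, ← map_add, show J + star J = ((2 * J.re : ℤ) : GaussianInt) by ext <;> simp; ring,
      map_intCast]
    push_cast
    ring

theorem sq_eq_sq_of_sq_add_sq_eq_prime {q : ℤ} (hq : Prime q) {a b x z : ℤ} (ha : Odd a)
    (hb : Even b) (hz : Even z) (hab : a ^ 2 + b ^ 2 = q) (hxz : x ^ 2 + z ^ 2 = q) :
    a ^ 2 = x ^ 2 := by
  have q_pos : 0 < q := by
    refine lt_of_le_of_ne ?_ hq.ne_zero.symm
    rw [← hab]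
    positivity
  have q_odd : Odd q := hab ▸ ha.pow.add_even (hb.pow_of_ne_zero two_ne_zero)
  have eq_of_dvd {b : ℤ} (hb : Even b) (hab : a ^ 2 + b ^ 2 = q) (dvd : q ∣ a * z - b * x) :
      a ^ 2 = x ^ 2 := by
    obtain ⟨c, hc⟩ := dvd
    -- Brahmagupta's identity bounds `|c|` by `1`, and parity excludes `c = ±1`.
    have brahmagupta : (q * c) ^ 2 + (a * x + b * z) ^ 2 = q ^ 2 := by
      rw [← hc]
      linear_combination (x ^ 2 + z ^ 2) * hab + q * hxz
    have c_even : Even c := by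
      have := (hz.mul_left a).sub (hb.mul_right x)
      rw [hc] at this
      exact (Int.even_mul.mp this).resolve_left (Int.not_even_iff_odd.mpr q_odd)
    have c_zero : c = 0 := by
      by_contra hc0
      obtain ⟨d, rfl⟩ := c_even
      have d_ne_zero : d ≠ 0 := by rintro rfl; exact hc0 rfl
      have d_sq_pos : 0 < d ^ 2 := by positivity
      nlinarith [sq_nonneg (a * x + b * z), mul_pos q_pos q_pos]
    rw [c_zero] at hc
    apply mul_left_cancel₀ hq.ne_zero
    linear_combination (a * z + b * x) * hc - a ^ 2 * hxz + x ^ 2 * hab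
  have dvd : q ∣ (a * z - b * x) * (a * z + b * x) :=
    ⟨a ^ 2 - x ^ 2, by linear_combination a ^ 2 * hxz - x ^ 2 * hab⟩
  obtain h | h := hq.dvd_or_dvd dvd
  · exact eq_of_dvd hb hab h
  · exact eq_of_dvd hb.neg (by rw [neg_sq, hab]) (by rwa [neg_mul, sub_neg_eq_add])

theorem four_mul_sq_mul_centralBinomSum_zero (hp : p = 4 * m + 1) {x y : ℤ}
    (hxy : (p : ℤ) = x ^ 2 + 4 * y ^ 2) :
    4 * (x : ZMod (p ^ 3)) ^ 2 * centralBinomSum p 3 0 =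
      (centralBinomSum p 3 0 + (p : ZMod (p ^ 3))) ^ 2 := by
  obtain ⟨a, b, a_odd, b_even, hab, β, prod, sum⟩ := exists_sq_add_sq_eq_and_quarticJacobiSum hp
  have a_sq := sq_eq_sq_of_sq_add_sq_eq_prime (Nat.prime_iff_prime_int.mp Fact.out) a_odd b_even
    (even_two_mul y) hab (show x ^ 2 + (2 * y) ^ 2 = p by rw [hxy]; ring)
  have cast_sq := congrArg (Int.cast : ℤ → ZMod (p ^ 3)) a_sq
  push_cast at cast_sq
  rw [← quarticJacobiSum_sq hp, ← prod, ← cast_sq]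
  linear_combination
    -quarticJacobiSum p m ^ 2 * (quarticJacobiSum p m + β + 2 * (a : ZMod (p ^ 3))) * sum

end GaussianJacobiSums

section Transfer

open Finset

variable {p r : ℕ}

theorem ratCongr_of_intCast_mul_sub_eq {a b : ℚ} {D z : ℤ} (hD : IsCoprime (p : ℤ) D)
    (hz : D * (a - b) = z) (hzr : (z : ZMod (p ^ r)) = 0) : ratCongr p r a b := by
  have num_eq : D * (a - b).num = z * (a - b).den := by
    have : (D : ℚ) * (a - b).num = z * (a - b).den := by
      rw [← hz, mul_assoc, Rat.mul_den_eq_num]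
    exact_mod_cast this
  have dvd_z : (p : ℤ) ^ r ∣ z := by
    exact_mod_cast (ZMod.intCast_zmod_eq_zero_iff_dvd z _).mp hzr
  exact hD.pow_left.dvd_of_dvd_mul_left (num_eq ▸ dvd_z.mul_right _)

theorem isCoprime_natCast_of_ne {q : ℕ} (hp : p.Prime) (hq : q.Prime) (hpq : p ≠ q) :
    IsCoprime (p : ℤ) q :=
  Nat.isCoprime_iff_coprime.mpr ((Nat.coprime_primes hp hq).mpr hpq)

theorem isCoprime_two_pow_mul_three_pow (hp : p.Prime) (hp2 : p ≠ 2) (hp3 : p ≠ 3) (i j : ℕ) :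
    IsCoprime (p : ℤ) (2 ^ i * 3 ^ j) :=
  (isCoprime_natCast_of_ne hp Nat.prime_two hp2).pow_right.mul_right
    (isCoprime_natCast_of_ne hp Nat.prime_three hp3).pow_right

variable [Fact p.Prime]

theorem ratCongr_sum_centralBinom (hp2 : p ≠ 2) (j : ℕ) {A B : ℤ} {b : ℚ}
    (hA : IsCoprime (p : ℤ) A) (hb : A * b = B)
    (hAB : (A : ZMod (p ^ r)) * centralBinomSum p r j = (B : ZMod (p ^ r))) :
    ratCongr p r (∑ k ∈ range p, (k : ℚ) ^ j * ((2 * k).choose k : ℚ) ^ 3 / (-8) ^ k) b := by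
  set N : ℤ := ∑ k ∈ range p, (k : ℤ) ^ j * (k.centralBinom : ℤ) ^ 3 * (-8) ^ (p - k) with hN
  have rat_sum : (-8 : ℚ) ^ p *
      ∑ k ∈ range p, (k : ℚ) ^ j * ((2 * k).choose k : ℚ) ^ 3 / (-8) ^ k = N := by
    rw [hN, mul_sum]
    push_cast
    refine sum_congr rfl fun k hk ↦ ?_
    rw [← pow_sub_mul_pow (-8 : ℚ) (mem_range.mp hk).le, Nat.centralBinom]
    field_simp
  have mod_sum : (-8 : ZMod (p ^ r)) ^ p * centralBinomSum p r j = N := by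
    rw [hN, centralBinomSum, mul_sum]
    push_cast
    refine sum_congr rfl fun k hk ↦ ?_
    rw [← pow_sub_mul_pow (-8 : ZMod (p ^ r)) (mem_range.mp hk).le]
    linear_combination (-8 : ZMod (p ^ r)) ^ (p - k) * (k : ZMod (p ^ r)) ^ j *
      neg_eight_pow_mul_centralBinomTerm (r := r) hp2 k
  have coprime_eight : IsCoprime (p : ℤ) (-8) := by
    have := (isCoprime_natCast_of_ne Fact.out Nat.prime_two hp2).pow_right (n := 3).neg_right
    norm_num at this
    exact this
  refine ratCongr_of_intCast_mul_sub_eq (coprime_eight.pow_right.mul_right hA)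
    (D := (-8) ^ p * A) (z := A * N - (-8) ^ p * B) ?_ ?_
  · push_cast
    linear_combination (A : ℚ) * rat_sum - (-8 : ℚ) ^ p * hb
  · push_cast
    linear_combination (-8 : ZMod (p ^ r)) ^ p * hAB - (A : ZMod (p ^ r)) * mod_sum

end Transfer

section Evaluations

variable {p m : ℕ} [Fact p.Prime]

theorem fifty_four_mul_sq_mul_centralBinomSum_two (hp : p = 4 * m + 1) {x y : ℤ}
    (hxy : (p : ℤ) = x ^ 2 + 4 * y ^ 2) :
    54 * (x : ZMod (p ^ 3)) ^ 2 * centralBinomSum p 3 2 =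
      20 * (x : ZMod (p ^ 3)) ^ 4 - 24 * (p : ZMod (p ^ 3)) * (x : ZMod (p ^ 3)) ^ 2 +
        (p : ZMod (p ^ 3)) ^ 2 := by
  have P3 := natCast_pow_zmod_self p 3
  have x_sq := four_mul_sq_mul_centralBinomSum_zero hp hxy
  have s1 := three_mul_centralBinomSum_one_add hp
  have s2 := quadratic_combination_mul_centralBinomSum_zero hp
  apply (((isUnit_two (p := p) (by omega)).pow 4).mul
    ((isUnit_centralBinomSum_zero hp).pow 2)).mul_left_cancel
  generalize (x : ZMod (p ^ 3)) = X at *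
  generalize (p : ZMod (p ^ 3)) = P at *
  generalize centralBinomSum p 3 0 = S at *
  linear_combination
    (4 * (54 * centralBinomSum p 3 2 * S) - 20 * (4 * X ^ 2 * S + (S + P) ^ 2) + 96 * P * S) *
        x_sq +
      4 * (S + P) ^ 2 * (3 * s2 - 14 * S * s1) + (32 * S + 16 * P) * P3

theorem three_hundred_twenty_four_mul_sq_mul_centralBinomSum_three (hp : p = 4 * m + 1) {x y : ℤ}
    (hxy : (p : ℤ) = x ^ 2 + 4 * y ^ 2) :
    324 * (x : ZMod (p ^ 3)) ^ 2 * centralBinomSum p 3 3 =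
      -16 * (x : ZMod (p ^ 3)) ^ 4 + 48 * (p : ZMod (p ^ 3)) * (x : ZMod (p ^ 3)) ^ 2 -
        17 * (p : ZMod (p ^ 3)) ^ 2 := by
  have P3 := natCast_pow_zmod_self p 3
  have telescope := centralBinomSum_telescope (p := p) (r := 3) le_rfl (by omega)
  have x_sq := four_mul_sq_mul_centralBinomSum_zero hp hxy
  have s1 := three_mul_centralBinomSum_one_add hp
  have s2 := quadratic_combination_mul_centralBinomSum_zero hp
  apply ((isUnit_centralBinomSum_zero hp).pow 2).mul_left_cancel
  generalize (x : ZMod (p ^ 3)) = X at *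
  generalize (p : ZMod (p ^ 3)) = P at *
  generalize centralBinomSum p 3 0 = S at *
  have s3 : 81 * centralBinomSum p 3 3 * S = -S ^ 2 + 10 * P * S - 18 * P ^ 2 := by
    linear_combination 9 * S * telescope - 2 * (3 * s2 - 14 * S * s1) - 18 * S * s1
  linear_combination
    (81 * centralBinomSum p 3 3 * S + (4 * X ^ 2 * S + (S + P) ^ 2) - 12 * P * S) * x_sq +
      (S + P) ^ 2 * s3 + (-34 * S - 17 * P) * P3

/-- The integer `R₁(p)`, for use in congruences. -/
def intR1 (p : ℕ) : ℤ :=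
  (2 * p + 2 - 2 ^ (p - 1)) * ((p - 1) / 2).choose (p / 4) ^ 2

theorem intCast_intR1 (p : ℕ) : (intR1 p : ℚ) = R1 p := by
  rw [intR1, R1]
  push_cast
  rfl

theorem centralBinomSum_two_add_centralBinomSum_one (hp : p = 4 * m + 3) :
    18 * centralBinomSum p 2 2 + 14 * centralBinomSum p 2 1 = (intR1 p : ZMod (p ^ 2)) := by
  rw [centralBinomSum_two_of_eq_four_mul_add_three hp, intR1,
    show (p - 1) / 2 = 2 * m + 1 by omega, show p / 4 = m by omega]
  push_cast
  rfl

theorem fifty_four_mul_centralBinomSum_two (hp : p = 4 * m + 3) :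
    54 * centralBinomSum p 2 2 = 3 * (intR1 p : ZMod (p ^ 2)) + 14 * (p : ZMod (p ^ 2)) := by
  linear_combination 3 * centralBinomSum_two_add_centralBinomSum_one hp -
    14 * three_mul_centralBinomSum_one hp

theorem eighty_one_mul_centralBinomSum_three (hp : p = 4 * m + 3) :
    81 * centralBinomSum p 2 3 = -6 * (intR1 p : ZMod (p ^ 2)) - 10 * (p : ZMod (p ^ 2)) := by
  linear_combination
    9 * centralBinomSum_telescope (p := p) (r := 2) (by norm_num) (by omega) -
      6 * centralBinomSum_two_add_centralBinomSum_one hp +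
      10 * three_mul_centralBinomSum_one hp - 9 * centralBinomSum_zero_eq_zero hp

theorem ne_zero_of_eq_sq_add_four_mul_sq {q x y : ℤ} (hq : q % 4 = 1)
    (hxy : q = x ^ 2 + 4 * y ^ 2) : x ≠ 0 := by
  rintro rfl
  omega

theorem isCoprime_of_eq_sq_add_four_mul_sq {x y : ℤ} (hp : p % 4 = 1)
    (hxy : (p : ℤ) = x ^ 2 + 4 * y ^ 2) : IsCoprime (p : ℤ) x := by
  have prime_p := Nat.prime_iff_prime_int.mp (Fact.out : p.Prime)
  have two_le : (2 : ℤ) ≤ p := by exact_mod_cast (Fact.out : p.Prime).two_le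
  rw [prime_p.coprime_iff_not_dvd]
  intro dvd
  have x_ne_zero := ne_zero_of_eq_sq_add_four_mul_sq (by omega) hxy
  have sq_le := Int.le_of_dvd (by positivity) (pow_dvd_pow_of_dvd dvd 2)
  nlinarith [sq_nonneg y]

end Evaluations

theorem statement0 (p : ℕ) (hp : p.Prime) (hp2 : p ≠ 2) :
    (∀ x y : ℤ, p % 4 = 1 → (p : ℤ) = x^2 + 4*y^2 →
      ratCongr p 3
        (∑ k ∈ Finset.range p, (k:ℚ)^2 * ((2*k).choose k : ℚ)^3 / (-8)^k)
        (10/27*(x:ℚ)^2 - 4/9*(p:ℚ) + (p:ℚ)^2/(54*(x:ℚ)^2)) ∧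
      ratCongr p 3
        (∑ k ∈ Finset.range p, (k:ℚ)^3 * ((2*k).choose k : ℚ)^3 / (-8)^k)
        (-(4/81)*(x:ℚ)^2 + 4/27*(p:ℚ) - 17*(p:ℚ)^2/(324*(x:ℚ)^2))) ∧
    (p % 4 = 3 → p ≠ 3 →
      ratCongr p 2
        (∑ k ∈ Finset.range p, (k:ℚ)^2 * ((2*k).choose k : ℚ)^3 / (-8)^k)
        (1/18*R1 p + 7/27*(p:ℚ)) ∧
      ratCongr p 2
        (∑ k ∈ Finset.range p, (k:ℚ)^3 * ((2*k).choose k : ℚ)^3 / (-8)^k)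
        (-(2/27)*R1 p - 10/81*(p:ℚ))) := by
  have : Fact p.Prime := ⟨hp⟩
  refine ⟨fun x y hp4 hxy ↦ ?_, fun hp4 hp3 ↦ ?_⟩
  · obtain ⟨m, hm⟩ : ∃ m, p = 4 * m + 1 := ⟨p / 4, by omega⟩
    have coprime_x := isCoprime_of_eq_sq_add_four_mul_sq hp4 hxy
    have x_ne_zero : (x : ℚ) ≠ 0 :=
      Int.cast_ne_zero.mpr (ne_zero_of_eq_sq_add_four_mul_sq (by omega) hxy)
    constructor
    · apply ratCongr_sum_centralBinom hp2 2 (A := 54 * x ^ 2)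
        (B := 20 * x ^ 4 - 24 * p * x ^ 2 + p ^ 2)
      · exact (isCoprime_two_pow_mul_three_pow hp hp2 (by omega) 1 3).mul_right coprime_x.pow_right
      · push_cast; field_simp; ring
      · exact_mod_cast fifty_four_mul_sq_mul_centralBinomSum_two hm hxy
    · apply ratCongr_sum_centralBinom hp2 3 (A := 324 * x ^ 2)
        (B := -16 * x ^ 4 + 48 * p * x ^ 2 - 17 * p ^ 2)
      · exact (isCoprime_two_pow_mul_three_pow hp hp2 (by omega) 2 4).mul_right coprime_x.pow_right
      · push_cast; field_simp; ring
      · exact_mod_cast three_hundred_twenty_four_mul_sq_mul_centralBinomSum_three hm hxy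
  · obtain ⟨m, hm⟩ : ∃ m, p = 4 * m + 3 := ⟨p / 4, by omega⟩
    rw [← intCast_intR1]
    constructor
    · apply ratCongr_sum_centralBinom hp2 2 (A := 54) (B := 3 * intR1 p + 14 * p)
        (isCoprime_two_pow_mul_three_pow hp hp2 hp3 1 3)
      · push_cast; ring
      · exact_mod_cast fifty_four_mul_centralBinomSum_two hm
    · apply ratCongr_sum_centralBinom hp2 3 (A := 81) (B := -6 * intR1 p - 10 * p)
        (isCoprime_two_pow_mul_three_pow hp hp2 hp3 0 4)
      · push_cast; ring
      · exact_mod_cast eighty_one_mul_centralBinomSum_three hm
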